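/- Suppose 𝒮 is finite. For every n≥1 and every R̂>0 there exists a matrix T_n on (ℂ^𝒳)^{⊗n}⊗H_B^{⊗n} with 0⪯T_n⪯I such that, for every probability distribution P on 𝒳 and every t∈(0,1): (i) for all s^n∈𝒮^n, Tr[(I−T_n)ρ^{XB}_{P,s^n}] ≤ (n+1)^{|𝒮|−1 + t|𝒳|(d_B−1)d_B/2 + (d_B−1)|𝒳|t} · 2^{n·t·(R̂ − min_Q I_{1−t}[X;B]_{P,Q})}, the minimum over all probability distributions Q on 𝒮; and (ii) for every density matrix σ on H_B^{⊗n}, Tr[T_n(ρ_P^{⊗n}⊗σ)] ≤ n^{d_B(d_B−1)/2}·Λ(n,d_B)·2^{−n·R̂}. -/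

import Mathlib

open scoped ComplexOrder

noncomputable section

/-- A density matrix: positive semidefinite with unit trace. -/
def IsDensity {m : Type*} [Fintype m] (ρ : Matrix m m ℂ) : Prop :=
  ρ.PosSemidef ∧ ρ.trace = 1

/-- Functional calculus for Hermitian matrices (junk value `0` on non-Hermitian input). -/
def matFun {m : Type*} [Fintype m] [DecidableEq m] (f : ℝ → ℝ) (A : Matrix m m ℂ) :
    Matrix m m ℂ :=
  if hA : A.IsHermitian then
    (hA.eigenvectorUnitary : Matrix m m ℂ) *
        Matrix.diagonal (fun i => (f (hA.eigenvalues i) : ℂ)) *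
      star (hA.eigenvectorUnitary : Matrix m m ℂ)
  else 0

/-- Matrix power, taken on the support (`0^p := 0` on the kernel). -/
def mpow {m : Type*} [Fintype m] [DecidableEq m] (A : Matrix m m ℂ) (p : ℝ) :
    Matrix m m ℂ :=
  matFun (fun u => if u ≤ 0 then 0 else u ^ p) A

/-- The classical–quantum state `Σ_x w(x) |x⟩⟨x| ⊗ ρ_x`. -/
def cqState {X B : Type*} [DecidableEq X] (w : X → ℝ) (ρ : X → Matrix B B ℂ) :
    Matrix (X × B) (X × B) ℂ :=
  Matrix.of fun p q => (if p.1 = q.1 then ((w p.1 : ℝ) : ℂ) else 0) * ρ p.1 p.2 q.2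

/-- Tensor product of a finite family of matrices, realized on functions. -/
def tensorFam {k d : Type*} [Fintype k] (ρ : k → Matrix d d ℂ) :
    Matrix (k → d) (k → d) ℂ :=
  Matrix.of fun i j => ∏ a, ρ a (i a) (j a)

/-- `Λ(n,d)`: the number of partitions of `n` into at most `d` parts. -/
def numPartLe (n d : ℕ) : ℕ := Nat.card {p : Nat.Partition n // p.parts.card ≤ d}

/-- The Rényi-type quantity `I_{1−t}[X;B]_{P,Q}`, given the mixed states `ρQ x`. -/
def renyiI {𝒳 : Type*} [Fintype 𝒳] {d : ℕ} (P : 𝒳 → ℝ)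
    (ρQ : 𝒳 → Matrix (Fin d) (Fin d) ℂ) (t : ℝ) : ℝ :=
  -((1 - t) / t) * Real.logb 2
    (Matrix.trace (mpow (∑ x, P x • mpow (ρQ x) (1 - t)) (1 / (1 - t)))).re

/-- Probability distributions on a finite set `𝒮`. -/
abbrev ProbVec (𝒮 : Type*) [Fintype 𝒮] : Type _ :=
  {Q : 𝒮 → ℝ // (∀ s, 0 ≤ Q s) ∧ ∑ s, Q s = 1}

/-!
Fix `x : 𝒳ⁿ`. The operators on `H_B^{⊗n}` invariant under the permutations preserving `x` form a
*-algebra, the symmetric operators a subalgebra. Decompose the identity into minimal projections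
`f j` of the subalgebra. The operator `τ = ∑ j, f j / tr (f j)` dominates every symmetric state, so
it serves as a universal alternative for type II errors. Write `τ = ∑ j, α j • g j` with `K x`
minimal projections `g j` of the larger algebra and let the test accept those `g j` with
`c * K x * α j ≤ 1 / tr (g j)`; its trace against `τ` is at most `1 / c`. The weight of a state `A`
of the larger algebra on a minimal projection is at most the inverse trace of the latter, and
minimal projections that are not orthogonal have equal traces, so the type I error for `A` is at
most `(c * K x) ^ t * tr (τ ^ t * A ^ (1 - t))`. Hölder's inequality turns the average of this over
`x` into the Rényi quantity, and the method of types reduces a state sequence `sⁿ` to the i.i.d.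
mixture with its empirical distribution.

The number of minimal projections is counted with highest weight vectors: by the LU decomposition,
lower triangular tensors already move such a vector everywhere in the module it generates, which
bounds the number by the dimension of a space of symmetric tensors over lower triangular matrices.
The resulting polynomial factors fit the required exponents when `𝒳` has at least two letters; for a
single letter the Rényi quantity vanishes and `T = 0` is good enough.
-/

/-! ### Resolutions of the identity and functional calculus -/

section ProjectionResolution

open scoped Matrix

variable {m ι : Type*} [Fintype m] [DecidableEq m] [Fintype ι]

/-- A resolution of the identity by mutually orthogonal Hermitian projections. -/
structure IsProjectionResolution (f : ι → Matrix m m ℂ) : Prop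
    extends CompleteOrthogonalIdempotents f where
  isHermitian : ∀ j, (f j).IsHermitian

namespace IsProjectionResolution

variable {f : ι → Matrix m m ℂ}

/-- The embedding `c ↦ ∑ j, c j • f j` of the diagonal algebra attached to a resolution `f` of the
identity; it turns computations with such sums into pointwise ones. -/
def diagonalHom (hf : IsProjectionResolution f) : (ι → ℂ) →ₐ[ℂ] Matrix m m ℂ :=
  AlgHom.ofLinearMap (Fintype.linearCombination ℂ f)
    (by simpa [Fintype.linearCombination_apply] using hf.complete)
    (fun c c' => by
      classical
      simp [Fintype.linearCombination_apply, Finset.sum_mul_sum, smul_smul,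
        hf.toOrthogonalIdempotents.mul_eq, mul_comm])

theorem diagonalHom_apply (hf : IsProjectionResolution f) (c : ι → ℂ) :
    hf.diagonalHom c = ∑ j, c j • f j :=
  rfl

theorem diagonalHom_single [DecidableEq ι] (hf : IsProjectionResolution f) (j : ι) :
    hf.diagonalHom (Pi.single j 1) = f j := by
  simp [diagonalHom_apply, Pi.single_apply]

theorem sum_smul_mul_sum_smul (hf : IsProjectionResolution f) (c c' : ι → ℂ) :
    (∑ j, c j • f j) * (∑ j, c' j • f j) = ∑ j, (c j * c' j) • f j :=
  (map_mul hf.diagonalHom c c').symm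

theorem sum_smul_mul (hf : IsProjectionResolution f) (c : ι → ℂ) (k : ι) :
    (∑ j, c j • f j) * f k = c k • f k := by
  classical
  rw [← hf.diagonalHom_single k, ← hf.diagonalHom_apply, ← map_mul, ← map_smul]
  congr 1
  ext j
  by_cases h : j = k <;> simp [h]

theorem mul_sum_smul (hf : IsProjectionResolution f) (c : ι → ℂ) (k : ι) :
    f k * (∑ j, c j • f j) = c k • f k := by
  rw [← hf.sum_smul_mul c k, ← hf.diagonalHom_apply]
  classical
  rw [← hf.diagonalHom_single k, ← map_mul, ← map_mul, mul_comm]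

theorem ext_mul_right (hf : IsProjectionResolution f) {A B : Matrix m m ℂ}
    (h : ∀ k, A * f k = B * f k) : A = B := by
  rw [← mul_one A, ← mul_one B, ← hf.complete, Finset.mul_sum, Finset.mul_sum]
  exact Finset.sum_congr rfl fun k _ => h k

theorem ext_mul_left (hf : IsProjectionResolution f) {A B : Matrix m m ℂ}
    (h : ∀ k, f k * A = f k * B) : A = B := by
  rw [← one_mul A, ← one_mul B, ← hf.complete, Finset.sum_mul, Finset.sum_mul]
  exact Finset.sum_congr rfl fun k _ => h k

theorem isHermitian_sum_smul (hf : IsProjectionResolution f) (p : ι → ℝ) :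
    (∑ j, (p j : ℂ) • f j).IsHermitian := by
  simp [Matrix.IsHermitian, Matrix.conjTranspose_sum, (hf.isHermitian _).eq]

theorem aeval_sum_smul (hf : IsProjectionResolution f) (c : ι → ℂ) (p : Polynomial ℂ) :
    Polynomial.aeval (∑ j, c j • f j) p = ∑ j, p.eval (c j) • f j := by
  rw [← hf.diagonalHom_apply, Polynomial.aeval_algHom_apply, Polynomial.aeval_pi_apply,
    diagonalHom_apply]
  simp

theorem posSemidef (hf : IsProjectionResolution f) (j : ι) : (f j).PosSemidef := by
  have h := Matrix.posSemidef_conjTranspose_mul_self (f j)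
  rwa [(hf.isHermitian j).eq, (hf.idem j).eq] at h

theorem posSemidef_sum_smul (hf : IsProjectionResolution f) {p : ι → ℝ} (hp : ∀ j, 0 ≤ p j) :
    (∑ j, (p j : ℂ) • f j).PosSemidef :=
  Matrix.posSemidef_sum _ fun j _ => (hf.posSemidef j).smul (by exact_mod_cast hp j)

/-- Merging the projections with a common weight gives again a resolution. -/
theorem sum_indicator_smul (hf : IsProjectionResolution f) (p : ι → ℝ) :
    IsProjectionResolution fun l : Finset.univ.image p =>
      ∑ j, (if p j = l then 1 else 0 : ℂ) • f j where
  idem l := by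
    simp only [IsIdempotentElem, hf.sum_smul_mul_sum_smul, ite_mul_ite, mul_one, mul_zero]
  ortho l l' hne := by
    refine (hf.sum_smul_mul_sum_smul _ _).trans ?_
    refine Finset.sum_eq_zero fun j _ => ?_
    by_cases h : p j = l
    · simp [h, Subtype.coe_injective.ne hne]
    · simp [h]
  complete := by
    rw [Finset.sum_comm, ← hf.complete]
    refine Finset.sum_congr rfl fun j _ => ?_
    rw [Finset.sum_eq_single ⟨p j, by simp⟩] <;> simp +contextual [Subtype.ext_iff, eq_comm]
  isHermitian l := by
    simpa using hf.isHermitian_sum_smul fun j => if p j = l then 1 else 0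

end IsProjectionResolution

/-- The rank one eigenprojections of a Hermitian matrix, one for each vector of its eigenbasis. -/
def eigenProj {A : Matrix m m ℂ} (hA : A.IsHermitian) (i : m) : Matrix m m ℂ :=
  Unitary.conjStarAlgAut ℂ _ hA.eigenvectorUnitary (Matrix.diagonal (Pi.single i 1))

variable {A : Matrix m m ℂ}

theorem isProjectionResolution_eigenProj (hA : A.IsHermitian) :
    IsProjectionResolution (eigenProj hA) where
  toCompleteOrthogonalIdempotents :=
    ((CompleteOrthogonalIdempotents.single fun _ : m => ℂ).map (Matrix.diagonalRingHom m ℂ)).map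
      (RingHomClass.toRingHom (Unitary.conjStarAlgAut ℂ (Matrix m m ℂ) hA.eigenvectorUnitary))
  isHermitian i := by
    rw [Matrix.IsHermitian, ← Matrix.star_eq_conjTranspose, eigenProj, ← map_star,
      Matrix.star_eq_conjTranspose, Matrix.diagonal_conjTranspose, ← Pi.single_star, star_one]

theorem sum_smul_eigenProj (hA : A.IsHermitian) (c : m → ℂ) :
    ∑ i, c i • eigenProj hA i =
      Unitary.conjStarAlgAut ℂ _ hA.eigenvectorUnitary (Matrix.diagonal c) := by
  have hc : Matrix.diagonal c = ∑ i, c i • Matrix.diagonal (Pi.single i (1 : ℂ)) := by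
    ext a b
    by_cases h : a = b <;> simp [Matrix.sum_apply, Pi.single_apply, h]
  simp only [hc, eigenProj, map_sum, map_smul]

theorem trace_eigenProj (hA : A.IsHermitian) (i : m) : (eigenProj hA i).trace = 1 := by
  rw [eigenProj, Unitary.conjStarAlgAut_apply, Matrix.trace_mul_cycle, Unitary.coe_star_mul_self,
    one_mul, Matrix.trace_diagonal]
  simp

theorem sum_eigenvalues_smul_eigenProj (hA : A.IsHermitian) :
    ∑ i, (hA.eigenvalues i : ℂ) • eigenProj hA i = A :=
  (sum_smul_eigenProj hA _).trans hA.spectral_theorem.symm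

theorem matFun_eq_sum_eigenProj (hA : A.IsHermitian) (g : ℝ → ℝ) :
    matFun g A = ∑ i, (g (hA.eigenvalues i) : ℂ) • eigenProj hA i := by
  rw [sum_smul_eigenProj, matFun, dif_pos hA, Unitary.conjStarAlgAut_apply]

theorem exists_polynomial_eval_eq (s : Finset ℝ) (g : ℝ → ℂ) :
    ∃ P : Polynomial ℂ, ∀ x ∈ s, P.eval (x : ℂ) = g x :=
  ⟨Lagrange.interpolate s (fun x : ℝ => (x : ℂ)) g, fun _ hx =>
    Lagrange.eval_interpolate_at_node _ Complex.ofReal_injective.injOn hx⟩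

theorem IsProjectionResolution.matFun_sum_smul {f : ι → Matrix m m ℂ}
    (hf : IsProjectionResolution f) (p : ι → ℝ) (g : ℝ → ℝ) :
    matFun g (∑ j, (p j : ℂ) • f j) = ∑ j, (g (p j) : ℂ) • f j := by
  have hA := hf.isHermitian_sum_smul p
  obtain ⟨P, hP⟩ := exists_polynomial_eval_eq
    (Finset.univ.image hA.eigenvalues ∪ Finset.univ.image p) fun x => g x
  calc matFun g (∑ j, (p j : ℂ) • f j)
      = ∑ i, P.eval (hA.eigenvalues i : ℂ) • eigenProj hA i := by
        rw [matFun_eq_sum_eigenProj hA]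
        exact Finset.sum_congr rfl fun i _ => by rw [hP _ (by simp)]
    _ = Polynomial.aeval (∑ j, (p j : ℂ) • f j) P := by
        rw [← (isProjectionResolution_eigenProj hA).aeval_sum_smul,
          sum_eigenvalues_smul_eigenProj]
    _ = ∑ j, (g (p j) : ℂ) • f j := by
        rw [hf.aeval_sum_smul]
        exact Finset.sum_congr rfl fun j _ => by rw [hP _ (by simp)]

theorem exists_spectral_resolution (hA : A.IsHermitian) :
    ∃ (s : Finset ℝ) (E : s → Matrix m m ℂ), IsProjectionResolution E ∧
      A = ∑ l : s, ((l : ℝ) : ℂ) • E l ∧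
      ∀ S : Subalgebra ℂ (Matrix m m ℂ), A ∈ S → ∀ l, E l ∈ S := by
  have hres := isProjectionResolution_eigenProj hA
  refine ⟨_, _, hres.sum_indicator_smul hA.eigenvalues, ?_, fun S hAS l => ?_⟩
  · conv_lhs => rw [← sum_eigenvalues_smul_eigenProj hA]
    simp_rw [Finset.smul_sum, smul_smul]
    rw [Finset.sum_comm]
    refine Finset.sum_congr rfl fun i _ => ?_
    rw [Finset.sum_eq_single ⟨hA.eigenvalues i, by simp⟩] <;>
      simp +contextual [Subtype.ext_iff, eq_comm]
  · obtain ⟨P, hP⟩ := exists_polynomial_eval_eq (Finset.univ.image hA.eigenvalues)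
      fun x => if x = l then 1 else 0
    have hE : ∑ i, (if hA.eigenvalues i = l then 1 else 0 : ℂ) • eigenProj hA i =
        Polynomial.aeval A P := by
      conv_rhs => rw [← sum_eigenvalues_smul_eigenProj hA, hres.aeval_sum_smul]
      exact Finset.sum_congr rfl fun i _ => by rw [hP _ (by simp)]
    rw [hE]
    exact Algebra.adjoin_le (by simpa using hAS) (Polynomial.aeval_mem_adjoin_singleton ℂ A)

end ProjectionResolution

section PosSemidefTrace

open scoped Matrix

variable {m : Type*} [Fintype m] {A : Matrix m m ℂ}

open scoped MatrixOrder Matrix.Norms.L2Operator in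
theorem exists_eq_conjTranspose_mul_self (hA : A.PosSemidef) : ∃ D : Matrix m m ℂ, A = Dᴴ * D := by
  classical
  exact CStarAlgebra.nonneg_iff_eq_star_mul_self.1 (Matrix.nonneg_iff_posSemidef.2 hA)

theorem trace_mul_nonneg_of_posSemidef {C : Matrix m m ℂ} (hA : A.PosSemidef)
    (hC : C.PosSemidef) : 0 ≤ (A * C).trace := by
  obtain ⟨D, rfl⟩ := exists_eq_conjTranspose_mul_self hA
  rw [mul_assoc, Matrix.trace_mul_comm]
  exact (hC.mul_mul_conjTranspose_same D).trace_nonneg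

end PosSemidefTrace

/-! ### Minimal projections of a matrix *-algebra -/

section MinimalProjection

open scoped Matrix

variable {m : Type*} [Fintype m]

theorem rank_lt_rank_of_isIdempotentElem {e q : Matrix m m ℂ} (he : IsIdempotentElem e)
    (heq : e * q = e) (hqe : q * e = e) (hne : e ≠ q) : e.rank < q.rank := by
  classical
  have hle : LinearMap.range e.mulVecLin ≤ LinearMap.range q.mulVecLin := by
    rw [← hqe, Matrix.mulVecLin_mul]
    exact LinearMap.range_comp_le_range _ _
  refine Submodule.finrank_lt_finrank_of_lt (hle.lt_of_ne fun hrange => hne ?_)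
  rw [← heq]
  refine Matrix.ext_of_mulVec_single fun i => ?_
  obtain ⟨w, hw⟩ : q *ᵥ Pi.single i 1 ∈ LinearMap.range e.mulVecLin := hrange ▸ ⟨_, rfl⟩
  rw [← Matrix.mulVec_mulVec, ← hw, Matrix.mulVecLin_apply, Matrix.mulVec_mulVec, he.eq]

variable [DecidableEq m] {B : StarSubalgebra ℂ (Matrix m m ℂ)}

/-- A nonzero projection `e ∈ B` which is minimal in the matrix *-algebra `B`, in the form
`e B e = ℂ e`. -/
structure IsMinimalProjection (B : StarSubalgebra ℂ (Matrix m m ℂ)) (e : Matrix m m ℂ) : Prop where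
  mem : e ∈ B
  isHermitian : e.IsHermitian
  idem : e * e = e
  ne_zero : e ≠ 0
  exists_mul_mul_eq_smul : ∀ a ∈ B, ∃ c : ℂ, e * a * e = c • e

/-- A decomposition of the projection `q` into mutually orthogonal minimal projections of `B`. -/
structure IsMinimalDecomposition (B : StarSubalgebra ℂ (Matrix m m ℂ)) {ι : Type*} [Fintype ι]
    (q : Matrix m m ℂ) (f : ι → Matrix m m ℂ) : Prop extends OrthogonalIdempotents f where
  sum_eq : ∑ j, f j = q
  isMinimal : ∀ j, IsMinimalProjection B (f j)

theorem mul_eq_self_of_sum_eq {ι : Type*} [Fintype ι] {f : ι → Matrix m m ℂ} {q : Matrix m m ℂ}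
    (hf : OrthogonalIdempotents f) (hq : ∑ j, f j = q) (j : ι) : f j * q = f j := by
  rw [← hq, hf.mul_sum_of_mem (Finset.mem_univ j)]

theorem self_mul_eq_of_sum_eq {ι : Type*} [Fintype ι] {f : ι → Matrix m m ℂ} {q : Matrix m m ℂ}
    (hf : OrthogonalIdempotents f) (hq : ∑ j, f j = q) (j : ι) : q * f j = f j := by
  classical
  simp [← hq, Finset.sum_mul, hf.mul_eq]

theorem IsMinimalDecomposition.sigma {ι : Type*} [Fintype ι] {κ : ι → Type*}
    [∀ i, Fintype (κ i)] {q : Matrix m m ℂ} {e : ι → Matrix m m ℂ}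
    {f : ∀ i, κ i → Matrix m m ℂ} (he : OrthogonalIdempotents e) (hq : ∑ i, e i = q)
    (hf : ∀ i, IsMinimalDecomposition B (e i) (f i)) :
    IsMinimalDecomposition B q fun p : Σ i, κ i => f p.1 p.2 where
  idem p := (hf p.1).idem p.2
  ortho := by
    rintro ⟨i, a⟩ ⟨j, b⟩ hne
    by_cases hij : i = j
    · subst hij
      exact (hf i).ortho fun hab => hne (Sigma.ext rfl (heq_of_eq hab))
    · change f i a * f j b = 0
      rw [← mul_eq_self_of_sum_eq (hf i).toOrthogonalIdempotents (hf i).sum_eq a,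
        ← self_mul_eq_of_sum_eq (hf j).toOrthogonalIdempotents (hf j).sum_eq b,
        mul_assoc, ← mul_assoc (e i), he.ortho hij, zero_mul, mul_zero]
  sum_eq := by simp_rw [Fintype.sum_sigma, (hf _).sum_eq, hq]
  isMinimal p := (hf p.1).isMinimal p.2

theorem exists_isHermitian_corner_not_scalar {q a : Matrix m m ℂ} (haB : a ∈ B)
    (ha : ∀ c : ℂ, q * a * q ≠ c • q) :
    ∃ b ∈ B, b.IsHermitian ∧ ∀ c : ℂ, q * b * q ≠ c • q := by
  by_contra! hscalar
  have haB' : aᴴ ∈ B := star_mem haB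
  obtain ⟨c₁, hc₁⟩ := hscalar (a + aᴴ) (add_mem haB haB') (Matrix.isHermitian_add_transpose_self a)
  obtain ⟨c₂, hc₂⟩ := hscalar (Complex.I • (a - aᴴ)) (B.smul_mem (sub_mem haB haB') _) (by
    simp only [Matrix.IsHermitian, Matrix.conjTranspose_smul, Matrix.conjTranspose_sub,
      Matrix.conjTranspose_conjTranspose, Complex.star_def, Complex.conj_I]
    module)
  have hsplit : a = (1 / 2 : ℂ) • (a + aᴴ) - (Complex.I / 2) • (Complex.I • (a - aᴴ)) := by
    rw [smul_smul, div_mul_eq_mul_div, Complex.I_mul_I]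
    module
  refine ha (1 / 2 * c₁ - Complex.I / 2 * c₂) ?_
  rw [hsplit, mul_sub, sub_mul, Matrix.mul_smul, Matrix.smul_mul, hc₁, Matrix.mul_smul,
    Matrix.smul_mul, hc₂]
  module

/-- The pieces are the spectral projections of a non-scalar Hermitian element of `q B q`. -/
theorem exists_proper_splitting {q : Matrix m m ℂ} (hqB : q ∈ B) (hq : q.IsHermitian)
    (hqq : q * q = q) (hq0 : q ≠ 0) (hmin : ¬ IsMinimalProjection B q) :
    ∃ (s : Finset ℝ) (e : s → Matrix m m ℂ), OrthogonalIdempotents e ∧ ∑ l, e l = q ∧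
      ∀ l, e l ∈ B ∧ (e l).IsHermitian ∧ e l ≠ q := by
  obtain ⟨a, haB, ha⟩ : ∃ a ∈ B, ∀ c : ℂ, q * a * q ≠ c • q := by
    by_contra! h
    exact hmin ⟨hqB, hq, hqq, hq0, h⟩
  obtain ⟨b, hbB, hb, hbscalar⟩ := exists_isHermitian_corner_not_scalar haB ha
  have hqbq : (q * b * q).IsHermitian := by
    simpa [hq.eq] using Matrix.isHermitian_mul_mul_conjTranspose q hb
  obtain ⟨s, E, hE, hsum, hmem⟩ := exists_spectral_resolution hqbq
  have hcomm : ∀ l, q * E l = E l * q := fun l => by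
    have hcentral : q * b * q ∈ Subalgebra.centralizer ℂ {q} := by
      simp [Subalgebra.mem_centralizer_iff, mul_assoc, hqq, ← mul_assoc q q]
    simpa [Subalgebra.mem_centralizer_iff] using hmem _ hcentral l
  have hEB : ∀ l, E l ∈ B := hmem B.toSubalgebra (mul_mem (mul_mem hqB hbB) hqB)
  have hmul : ∀ l l', E l * q * (E l' * q) = E l * E l' * q := fun l l' => by
    rw [mul_assoc, ← mul_assoc q, hcomm, mul_assoc (E l'), hqq, mul_assoc]
  refine ⟨s, fun l => E l * q, ⟨fun l => ?_, fun l l' hne => ?_⟩, ?_, fun l =>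
    ⟨mul_mem (hEB l) hqB, ?_, fun (hEq : E l * q = q) => ?_⟩⟩
  · rw [IsIdempotentElem, hmul, (hE.idem l).eq]
  · exact (hmul l l').trans (by rw [hE.ortho hne, zero_mul])
  · rw [← Finset.sum_mul, hE.complete, one_mul]
  · rw [Matrix.IsHermitian, Matrix.conjTranspose_mul, hq.eq, (hE.isHermitian l).eq, hcomm]
  · refine hbscalar l ?_
    calc q * b * q = (q * b * q) * (E l * q) := by rw [hEq, mul_assoc (q * b), hqq]
      _ = ((l : ℝ) : ℂ) • q := by rw [hsum, ← mul_assoc, hE.sum_smul_mul, Matrix.smul_mul, hEq]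

theorem exists_isMinimalDecomposition (B : StarSubalgebra ℂ (Matrix m m ℂ)) {q : Matrix m m ℂ}
    (hqB : q ∈ B) (hq : q.IsHermitian) (hqq : q * q = q) :
    ∃ (ι : Type) (_ : Fintype ι) (f : ι → Matrix m m ℂ), IsMinimalDecomposition B q f := by
  induction hr : q.rank using Nat.strong_induction_on generalizing q with
  | _ r ih =>
  by_cases hq0 : q = 0
  · exact ⟨Empty, inferInstance, Empty.elim, ⟨nofun, nofun⟩, by simp [hq0], nofun⟩
  by_cases hmin : IsMinimalProjection B q
  · exact ⟨Unit, inferInstance, fun _ => q, ⟨fun _ => hqq, fun _ _ h => (h rfl).elim⟩, by simp,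
      fun _ => hmin⟩
  obtain ⟨s, e, he, hsum, hprop⟩ := exists_proper_splitting hqB hq hqq hq0 hmin
  have hrank : ∀ l, (e l).rank < r := fun l => hr ▸ rank_lt_rank_of_isIdempotentElem (he.idem l)
    (mul_eq_self_of_sum_eq he hsum l) (self_mul_eq_of_sum_eq he hsum l) (hprop l).2.2
  choose κ _ f hf using fun l => ih _ (hrank l) (hprop l).1 (hprop l).2.1 (he.idem l) rfl
  exact ⟨_, _, _, IsMinimalDecomposition.sigma he hsum hf⟩

theorem exists_isMinimalDecomposition_diagonalizing {h : Matrix m m ℂ} (hhB : h ∈ B)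
    (hh : h.IsHermitian) :
    ∃ (ι : Type) (_ : Fintype ι) (f : ι → Matrix m m ℂ) (p : ι → ℝ),
      IsMinimalDecomposition B 1 f ∧ h = ∑ j, (p j : ℂ) • f j := by
  obtain ⟨s, E, hE, hsum, hmem⟩ := exists_spectral_resolution hh
  choose κ _ f hf using fun l => exists_isMinimalDecomposition B (hmem B.toSubalgebra hhB l)
    (hE.isHermitian l) (hE.idem l)
  refine ⟨_, _, _, fun p => (p.1 : ℝ),
    IsMinimalDecomposition.sigma hE.toOrthogonalIdempotents hE.complete hf, ?_⟩
  simp_rw [Fintype.sum_sigma, ← Finset.smul_sum, (hf _).sum_eq]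
  exact hsum

namespace IsMinimalProjection

variable {e e' : Matrix m m ℂ}

theorem posSemidef (he : IsMinimalProjection B e) : e.PosSemidef := by
  have h := Matrix.posSemidef_conjTranspose_mul_self e
  rwa [he.isHermitian.eq, he.idem] at h

theorem ofReal_re_trace (he : IsMinimalProjection B e) : (e.trace.re : ℂ) = e.trace :=
  (Complex.eq_re_of_ofReal_le (r := 0) (by simpa using he.posSemidef.trace_nonneg)).symm

theorem re_trace_pos (he : IsMinimalProjection B e) : 0 < e.trace.re := by
  refine (Complex.le_def.1 he.posSemidef.trace_nonneg).1.lt_of_ne fun h => he.ne_zero ?_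
  rw [← he.posSemidef.trace_eq_zero_iff, ← he.ofReal_re_trace, ← h]
  simp

/-- `e e' e` and `e' e e'` are the same multiple of `e` and `e'`, and have the same trace. -/
theorem trace_eq_of_mul_ne_zero (he : IsMinimalProjection B e) (he' : IsMinimalProjection B e')
    (hne : e * e' ≠ 0) : e.trace = e'.trace := by
  obtain ⟨c, hc⟩ := he.exists_mul_mul_eq_smul e' he'.mem
  obtain ⟨c', hc'⟩ := he'.exists_mul_mul_eq_smul e he.mem
  have hcc : c = c' := by
    refine smul_left_injective ℂ hne ?_
    change c • (e * e') = c' • (e * e')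
    rw [← Matrix.smul_mul, ← hc, ← Matrix.mul_smul, ← hc']
    simp only [mul_assoc]
  have hc0 : c ≠ 0 := by
    rintro rfl
    refine hne (Matrix.self_mul_conjTranspose_eq_zero.1 ?_)
    rw [Matrix.conjTranspose_mul, he.isHermitian.eq, he'.isHermitian.eq, mul_assoc,
      ← mul_assoc e', he'.idem, ← mul_assoc, hc, zero_smul]
  have htrace : (e * e' * e).trace = (e' * e * e').trace := by
    rw [Matrix.trace_mul_cycle, he.idem, Matrix.trace_mul_cycle, he'.idem, Matrix.trace_mul_comm]
  rw [hc, hc', Matrix.trace_smul, Matrix.trace_smul, ← hcc] at htrace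
  exact mul_left_cancel₀ hc0 htrace

end IsMinimalProjection

/-- The operator `∑ j, f j / Tr (f j)`. For a minimal decomposition of the identity in a *-algebra
it depends only on the algebra and dominates all its density matrices, like a universal state up to
normalization. -/
def universalOperator {ι : Type*} [Fintype ι] (f : ι → Matrix m m ℂ) : Matrix m m ℂ :=
  ∑ j, (((f j).trace.re⁻¹ : ℝ) : ℂ) • f j

namespace IsMinimalDecomposition

variable {ι κ : Type*} [Fintype ι] [Fintype κ] {f : ι → Matrix m m ℂ} {e : κ → Matrix m m ℂ}

theorem isProjectionResolution (hf : IsMinimalDecomposition B 1 f) : IsProjectionResolution f :=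
  ⟨⟨hf.toOrthogonalIdempotents, hf.sum_eq⟩, fun j => (hf.isMinimal j).isHermitian⟩

theorem universalOperator_eq (hf : IsMinimalDecomposition B 1 f)
    (he : IsMinimalDecomposition B 1 e) : universalOperator f = universalOperator e := by
  refine he.isProjectionResolution.ext_mul_right fun k =>
    hf.isProjectionResolution.ext_mul_left fun j => ?_
  rw [universalOperator, universalOperator, he.isProjectionResolution.sum_smul_mul, ← mul_assoc,
    hf.isProjectionResolution.mul_sum_smul, Matrix.smul_mul, Matrix.mul_smul]
  by_cases h : f j * e k = 0
  · simp [h]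
  · rw [(hf.isMinimal j).trace_eq_of_mul_ne_zero (he.isMinimal k) h]

end IsMinimalDecomposition

end MinimalProjection

/-! ### Tensor products and the algebra of colored tensors -/

section TensorProducts

open scoped Matrix

variable {κ δ : Type*} [Fintype κ]

theorem conjTranspose_tensorFam (X : κ → Matrix δ δ ℂ) :
    (tensorFam X)ᴴ = tensorFam fun k => (X k)ᴴ := by
  ext i j
  simp [tensorFam, Matrix.conjTranspose_apply]

theorem tensorFam_smul (c : κ → ℂ) (X : κ → Matrix δ δ ℂ) :
    tensorFam (fun k => c k • X k) = (∏ k, c k) • tensorFam X := by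
  ext i j
  simp [tensorFam, Finset.prod_mul_distrib]

theorem tensorFam_one [DecidableEq δ] : tensorFam (fun _ : κ => (1 : Matrix δ δ ℂ)) = 1 := by
  ext i j
  simp [tensorFam, Matrix.one_apply, Finset.prod_ite_zero, funext_iff]

variable [DecidableEq κ]

theorem tensorFam_sum {σ : Type*} [Fintype σ] (X : κ → σ → Matrix δ δ ℂ) :
    tensorFam (fun k => ∑ s, X k s) = ∑ g : κ → σ, tensorFam fun k => X k (g k) := by
  ext i j
  simp only [tensorFam, Matrix.of_apply, Matrix.sum_apply]
  rw [Finset.prod_univ_sum, Fintype.piFinset_univ]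

variable [Fintype δ]

theorem tensorFam_mul_tensorFam (X Y : κ → Matrix δ δ ℂ) :
    tensorFam X * tensorFam Y = tensorFam fun k => X k * Y k := by
  ext i j
  simp only [tensorFam, Matrix.mul_apply, Matrix.of_apply]
  rw [Finset.prod_univ_sum, Fintype.piFinset_univ]
  exact Finset.sum_congr rfl fun p _ => Finset.prod_mul_distrib.symm

theorem trace_tensorFam (X : κ → Matrix δ δ ℂ) : (tensorFam X).trace = ∏ k, (X k).trace := by
  simp only [tensorFam, Matrix.trace, Matrix.diag, Matrix.of_apply]
  rw [Finset.prod_univ_sum, Fintype.piFinset_univ]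

theorem posSemidef_tensorFam {κ δ : Type*} [Fintype κ] [Finite δ] {X : κ → Matrix δ δ ℂ}
    (hX : ∀ k, (X k).PosSemidef) : (tensorFam X).PosSemidef := by
  classical
  cases nonempty_fintype δ
  choose D hD using fun k => exists_eq_conjTranspose_mul_self (hX k)
  have hfactor : tensorFam X = (tensorFam D)ᴴ * tensorFam D := by
    rw [conjTranspose_tensorFam, tensorFam_mul_tensorFam]
    exact congrArg tensorFam (funext hD)
  rw [hfactor]
  exact Matrix.posSemidef_conjTranspose_mul_self _

theorem isDensity_tensorFam {X : κ → Matrix δ δ ℂ} (hX : ∀ k, IsDensity (X k)) :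
    IsDensity (tensorFam X) :=
  ⟨posSemidef_tensorFam fun k => (hX k).1, by simp [trace_tensorFam, (hX _).2]⟩

end TensorProducts

section ColorAlgebra

open scoped Matrix

variable {κ δ 𝒳 : Type*} [Fintype κ]

/-- The linear span of the tensors `⊗_k X (x k)`, in which the factor at `k` depends only on the
color `x k`. -/
def colorSpan (δ : Type*) (x : κ → 𝒳) : Submodule ℂ (Matrix (κ → δ) (κ → δ) ℂ) :=
  Submodule.span ℂ (Set.range fun X : 𝒳 → Matrix δ δ ℂ => tensorFam fun k => X (x k))

theorem tensorFam_mem_colorSpan (x : κ → 𝒳) (X : 𝒳 → Matrix δ δ ℂ) :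
    (tensorFam fun k => X (x k)) ∈ colorSpan δ x :=
  Submodule.subset_span ⟨X, rfl⟩

theorem conjTranspose_mem_colorSpan {x : κ → 𝒳} {A : Matrix (κ → δ) (κ → δ) ℂ}
    (hA : A ∈ colorSpan δ x) : Aᴴ ∈ colorSpan δ x := by
  induction hA using Submodule.span_induction with
  | zero => simp
  | add A B _ _ hA hB => simpa only [Matrix.conjTranspose_add] using add_mem hA hB
  | smul c A _ hA =>
    simpa only [Matrix.conjTranspose_smul] using Submodule.smul_mem _ (star c) hA
  | mem A hA =>
    obtain ⟨X, rfl⟩ := hA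
    simpa only [conjTranspose_tensorFam] using tensorFam_mem_colorSpan x fun a => (X a)ᴴ

variable [DecidableEq κ] [Fintype δ]

theorem mul_mem_colorSpan {x : κ → 𝒳} {A B : Matrix (κ → δ) (κ → δ) ℂ}
    (hA : A ∈ colorSpan δ x) (hB : B ∈ colorSpan δ x) : A * B ∈ colorSpan δ x := by
  classical
  have hAB := Submodule.mul_mem_mul hA hB
  rw [colorSpan, Submodule.span_mul_span] at hAB
  refine Submodule.span_mono ?_ hAB
  rintro _ ⟨_, ⟨X, rfl⟩, _, ⟨Y, rfl⟩, rfl⟩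
  exact ⟨fun a => X a * Y a, (tensorFam_mul_tensorFam _ _).symm⟩

variable [DecidableEq δ]

/-- The *-algebra structure on `colorSpan δ x`. For a constant coloring this is the algebra of
permutation-invariant matrices. -/
def colorAlgebra (δ : Type*) [Fintype δ] [DecidableEq δ] (x : κ → 𝒳) :
    StarSubalgebra ℂ (Matrix (κ → δ) (κ → δ) ℂ) where
  toSubalgebra := (colorSpan δ x).toSubalgebra
    (by simpa only [tensorFam_one] using tensorFam_mem_colorSpan x fun _ => (1 : Matrix δ δ ℂ))
    fun _ _ => mul_mem_colorSpan
  star_mem' := conjTranspose_mem_colorSpan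

theorem mem_colorAlgebra {x : κ → 𝒳} {A : Matrix (κ → δ) (κ → δ) ℂ} :
    A ∈ colorAlgebra δ x ↔ A ∈ colorSpan δ x :=
  Iff.rfl

theorem tensorFam_mem_colorAlgebra (x : κ → 𝒳) (X : 𝒳 → Matrix δ δ ℂ) :
    (tensorFam fun k => X (x k)) ∈ colorAlgebra δ x :=
  tensorFam_mem_colorSpan x X

theorem colorAlgebra_const_le (x : κ → 𝒳) : colorAlgebra δ (fun _ : κ => ()) ≤ colorAlgebra δ x :=
  Submodule.span_le.2 <| by
    rintro _ ⟨X, rfl⟩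
    exact tensorFam_mem_colorSpan x fun _ => X ()

end ColorAlgebra

section HighestWeight

open scoped Matrix

variable {κ 𝒳 : Type*} [Fintype κ] {d : ℕ}

/-- Upper triangular with unit diagonal. -/
def IsUpperUnitriangular (N : Matrix (Fin d) (Fin d) ℂ) : Prop :=
  N.BlockTriangular id ∧ ∀ i, N i i = 1

/-- The height of a basis index; tensor products of upper unitriangular matrices fix a vector up
to components of smaller height. -/
def height (i : κ → Fin d) : ℕ := ∑ k, (i k : ℕ)

theorem height_lt_height {i j : κ → Fin d} (hij : i < j) : height i < height j := by
  obtain ⟨hle, k, hk⟩ := Pi.lt_def.1 hij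
  exact Finset.sum_lt_sum (fun k _ => hle k) ⟨k, Finset.mem_univ k, hk⟩

variable [DecidableEq κ]

theorem tensorFam_mulVec_apply_eq_of_height {N : κ → Matrix (Fin d) (Fin d) ℂ}
    (hN : ∀ k, IsUpperUnitriangular (N k)) {w : (κ → Fin d) → ℂ} {i : κ → Fin d}
    (hw : ∀ j, height i < height j → w j = 0) : (tensorFam N *ᵥ w) i = w i := by
  have hentry : (tensorFam N *ᵥ w) i = ∑ j, (∏ k, N k (i k) (j k)) * w j := rfl
  rw [hentry, Finset.sum_eq_single i]
  · simp [(hN _).2]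
  · intro j _ hji
    by_cases hle : i ≤ j
    · rw [hw j (height_lt_height (hle.lt_of_ne' hji)), mul_zero]
    · obtain ⟨k, hk⟩ := not_forall.1 hle
      rw [Finset.prod_eq_zero (Finset.mem_univ k) ((hN k).1 (not_le.1 hk)), zero_mul]
  · simp

/-- Highest weight vectors: a vector of minimal height in the cyclic module generated by `v`. -/
theorem exists_mulVec_fixed_of_isUpperUnitriangular (x : κ → 𝒳) {v : (κ → Fin d) → ℂ}
    (hv : v ≠ 0) :
    ∃ b ∈ colorAlgebra (Fin d) x, b *ᵥ v ≠ 0 ∧ ∀ N : 𝒳 → Matrix (Fin d) (Fin d) ℂ,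
      (∀ a, IsUpperUnitriangular (N a)) →
        (tensorFam fun k => N (x k)) *ᵥ (b *ᵥ v) = b *ᵥ v := by
  classical
  let HeightBelow : ℕ → Prop := fun h => ∃ b ∈ colorAlgebra (Fin d) x, b *ᵥ v ≠ 0 ∧
    ∀ i : κ → Fin d, h ≤ height i → (b *ᵥ v) i = 0
  have hex : ∃ h, HeightBelow h :=
    ⟨Finset.univ.sup height + 1, 1, one_mem _, by simpa using hv, fun i hi =>
      absurd (Finset.le_sup (f := height) (Finset.mem_univ i)) (by omega)⟩
  obtain ⟨b, hb, hbv, hbelow⟩ := Nat.find_spec hex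
  refine ⟨b, hb, hbv, fun N hN => ?_⟩
  by_contra hne
  have hpos : Nat.find hex ≠ 0 := fun h0 => hbv (funext fun i => hbelow i (by omega))
  refine Nat.find_min hex (m := Nat.find hex - 1) (by omega)
    ⟨((tensorFam fun k => N (x k)) - 1) * b,
      mul_mem (sub_mem (tensorFam_mem_colorAlgebra x N) (one_mem _)) hb, ?_, fun i hi => ?_⟩
  all_goals
    rw [← Matrix.mulVec_mulVec, Matrix.sub_mulVec, Matrix.one_mulVec]
  · exact sub_ne_zero.2 hne
  · rw [Pi.sub_apply, sub_eq_zero]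
    exact tensorFam_mulVec_apply_eq_of_height (fun k => hN (x k)) fun j hj =>
      hbelow j (by omega)

end HighestWeight

section PolynomialCurves

open Polynomial in
/-- A linear functional vanishing on `W` is a polynomial in `z` along the curve. -/
theorem tensorFam_add_smul_mem_of_infinite {κ δ : Type*} [Fintype κ] [Finite δ]
    (W : Submodule ℂ (Matrix (κ → δ) (κ → δ) ℂ)) (A B : κ → Matrix δ δ ℂ)
    (hinf : {z : ℂ | tensorFam (fun k => A k + z • B k) ∈ W}.Infinite) (z : ℂ) :
    tensorFam (fun k => A k + z • B k) ∈ W := by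
  classical
  cases nonempty_fintype δ
  by_contra hz
  obtain ⟨φ, hφ, hW⟩ := Submodule.exists_le_ker_of_notMem hz
  let p : ℂ[X] := ∑ i : κ → δ, ∑ j : κ → δ,
    C (φ (Matrix.single i j 1)) * ∏ k, (C (A k (i k) (j k)) + X * C (B k (i k) (j k)))
  have hp : ∀ w, p.eval w = φ (tensorFam fun k => A k + w • B k) := by
    intro w
    conv_rhs => rw [Matrix.matrix_eq_sum_single (tensorFam fun k => A k + w • B k)]
    simp only [map_sum, p, eval_finsetSum, eval_mul, eval_C, eval_prod, eval_add, eval_X]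
    refine Finset.sum_congr rfl fun i _ => Finset.sum_congr rfl fun j _ => ?_
    have hsingle := Matrix.smul_single (tensorFam (fun k => A k + w • B k) i j) i j (1 : ℂ)
    rw [smul_eq_mul, mul_one] at hsingle
    rw [← hsingle, map_smul, smul_eq_mul, mul_comm]
    rfl
  have hp0 : p = 0 := by
    refine eq_zero_of_infinite_isRoot p (hinf.mono fun w hw => ?_)
    rw [Set.mem_ofPred_eq, IsRoot, hp]
    exact hW hw
  exact hφ (by rw [← hp, hp0, eval_zero])

end PolynomialCurves

/-! ### Counting minimal projections -/

section TriangularFactorization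

open scoped Matrix

theorem exists_eq_lower_mul_isUpperUnitriangular {d : ℕ} {X : Matrix (Fin d) (Fin d) ℂ}
    (hX : X.PosDef) :
    ∃ Y N : Matrix (Fin d) (Fin d) ℂ,
      X = Y * N ∧ Y.BlockTriangular OrderDual.toDual ∧ IsUpperUnitriangular N := by
  let L := LDL.lower hX
  have hL : L.BlockTriangular OrderDual.toDual := Matrix.blockTriangular_inv_of_blockTriangular
    fun i j h => LDL.lowerInv_triangular hX h
  have hdiag : ∀ i, star (L i i) ≠ 0 := by
    have hdet : L.det ≠ 0 :=
      (Matrix.isUnit_nonsing_inv_det_iff.2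
        (Matrix.isUnit_det_of_invertible (LDL.lowerInv hX))).ne_zero
    rw [Matrix.det_of_isLowerTriangular L hL] at hdet
    exact fun i => star_ne_zero.2 (Finset.prod_ne_zero_iff.1 hdet i (Finset.mem_univ i))
  refine ⟨L * Matrix.diagonal (fun i => LDL.diagEntries hX i * star (L i i)),
    Matrix.diagonal (fun i => (star (L i i))⁻¹) * Lᴴ, ?_, fun i j hij => ?_, fun i j hij => ?_,
    fun i => ?_⟩
  · rw [mul_assoc, ← mul_assoc (Matrix.diagonal _), Matrix.diagonal_mul_diagonal]
    simp only [mul_assoc, mul_inv_cancel₀ (hdiag _), mul_one]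
    rw [← mul_assoc]
    exact (LDL.lower_conj_diag hX).symm
  · rw [Matrix.mul_diagonal, hL hij, zero_mul]
  · rw [Matrix.diagonal_mul, Matrix.conjTranspose_apply, hL hij, star_zero, mul_zero]
  · rw [Matrix.diagonal_mul, Matrix.conjTranspose_apply, inv_mul_cancel₀ (hdiag i)]

end TriangularFactorization

section PosDefSpan

open scoped Matrix

variable {δ : Type*} [Finite δ]

theorem eventually_posDef_smul_one_add [DecidableEq δ] {H : Matrix δ δ ℂ} (hH : H.IsHermitian) :
    ∀ᶠ c : ℝ in Filter.atTop, ((c : ℂ) • (1 : Matrix δ δ ℂ) + H).PosDef := by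
  cases nonempty_fintype δ
  have hlarge : ∀ᶠ c : ℝ in Filter.atTop, ∀ i, 1 - hH.eigenvalues i ≤ c :=
    Filter.eventually_all.2 fun i => Filter.eventually_ge_atTop _
  filter_upwards [hlarge] with c hc
  have hres := isProjectionResolution_eigenProj hH
  have hsplit : (c : ℂ) • (1 : Matrix δ δ ℂ) + H =
      1 + ∑ i, ((c - 1 + hH.eigenvalues i : ℝ) : ℂ) • eigenProj hH i := by
    simp only [Complex.ofReal_add, add_smul, Finset.sum_add_distrib, ← Finset.smul_sum,
      sum_eigenvalues_smul_eigenProj, hres.complete]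
    push_cast
    module
  rw [hsplit]
  exact Matrix.PosDef.one.add_posSemidef (hres.posSemidef_sum_smul fun i => by linarith [hc i])

variable {κ 𝒳 : Type*} [Fintype κ] [Finite 𝒳] {x : κ → 𝒳}
  {W : Submodule ℂ (Matrix (κ → δ) (κ → δ) ℂ)}

theorem infinite_of_eventually_atTop {p : ℂ → Prop} (hp : ∀ᶠ c : ℝ in Filter.atTop, p c) :
    {z | p z}.Infinite := by
  obtain ⟨c₀, hc₀⟩ := Filter.eventually_atTop.1 hp
  refine ((Set.Ici_infinite c₀).image Complex.ofReal_injective.injOn).mono ?_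
  rintro _ ⟨c, hc, rfl⟩
  exact hc₀ c hc

theorem tensorFam_mem_of_posDef_of_isHermitian
    (hW : ∀ X : 𝒳 → Matrix δ δ ℂ, (∀ a, (X a).PosDef) → (tensorFam fun k => X (x k)) ∈ W)
    {H : 𝒳 → Matrix δ δ ℂ} (hH : ∀ a, (H a).IsHermitian) : (tensorFam fun k => H (x k)) ∈ W := by
  classical
  have hinf : {z : ℂ | tensorFam (fun k => H (x k) + z • (1 : Matrix δ δ ℂ)) ∈ W}.Infinite := by
    refine infinite_of_eventually_atTop ?_
    filter_upwards [Filter.eventually_all.2 fun a => eventually_posDef_smul_one_add (hH a)]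
      with c hc
    simpa only [add_comm] using hW _ hc
  simpa using tensorFam_add_smul_mem_of_infinite W (fun k => H (x k)) (fun _ => 1) hinf 0

/-- Positive definite matrices are Zariski dense. -/
theorem colorSpan_le_of_posDef
    (hW : ∀ X : 𝒳 → Matrix δ δ ℂ, (∀ a, (X a).PosDef) → (tensorFam fun k => X (x k)) ∈ W) :
    colorSpan δ x ≤ W := by
  refine Submodule.span_le.2 ?_
  rintro _ ⟨X, rfl⟩
  have hinf : {z : ℂ | tensorFam
      (fun k => (realPart (X (x k)) : Matrix δ δ ℂ) + z • (imaginaryPart (X (x k)) : Matrix δ δ ℂ))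
        ∈ W}.Infinite := by
    refine infinite_of_eventually_atTop (.of_forall fun c => ?_)
    refine tensorFam_mem_of_posDef_of_isHermitian hW
      (H := fun a =>
        (realPart (X a) : Matrix δ δ ℂ) + (c : ℂ) • (imaginaryPart (X a) : Matrix δ δ ℂ))
      fun a => ?_
    have hc : IsSelfAdjoint (c : ℂ) := Complex.conj_ofReal c
    exact (realPart (X a)).2.add (hc.smul (imaginaryPart (X a)).2)
  have hmem := tensorFam_add_smul_mem_of_infinite W _ _ hinf Complex.I
  simpa only [realPart_add_I_smul_imaginaryPart, SetLike.mem_coe] using hmem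

end PosDefSpan

section LowerTensorSpan

variable {κ 𝒳 : Type*} [Fintype κ] {d : ℕ}

/-- Positions on or below the diagonal of a `d × d` matrix. -/
abbrev LowerIndex (d : ℕ) : Type := {p : Fin d × Fin d // p.2 ≤ p.1}

/-- The number of indices at which the word `x` has the letter `a`. -/
def occurrences [DecidableEq 𝒳] (x : κ → 𝒳) (a : 𝒳) : ℕ := Fintype.card {k // x k = a}

/-- The span of the tensors `⊗_k Y (x k)` with lower triangular factors. -/
def lowerTensorSpan (d : ℕ) (x : κ → 𝒳) : Submodule ℂ (Matrix (κ → Fin d) (κ → Fin d) ℂ) :=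
  Submodule.span ℂ {A | ∃ Y : 𝒳 → Matrix (Fin d) (Fin d) ℂ,
    (∀ a, (Y a).BlockTriangular OrderDual.toDual) ∧ A = tensorFam fun k => Y (x k)}

theorem card_piAntidiag_univ {α : Type*} [Fintype α] [DecidableEq α] (n : ℕ) :
    (Finset.piAntidiag (Finset.univ : Finset α) n).card = (Fintype.card α).multichoose n := by
  rw [← Finset.map_sym_eq_piAntidiag, Finset.card_map, Finset.sym_univ, Finset.card_univ,
    Sym.card_sym_eq_multichoose]

variable [DecidableEq 𝒳]

theorem sum_occurrences [Fintype 𝒳] (x : κ → 𝒳) : ∑ a, occurrences x a = Fintype.card κ := by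
  rw [← Fintype.card_congr (Equiv.sigmaFiberEquiv x), Fintype.card_sigma]
  rfl

theorem prod_pow_occurrences {M : Type*} [CommMonoid M] [Fintype 𝒳] (x : κ → 𝒳) (f : 𝒳 → M) :
    ∏ k, f (x k) = ∏ a, f a ^ occurrences x a := by
  rw [← Fintype.prod_fiberwise x]
  refine Finset.prod_congr rfl fun a _ => ?_
  rw [Finset.prod_congr rfl fun k _ => congrArg f k.2, Finset.prod_const, Finset.card_univ,
    occurrences]

theorem occurrences_fst_eq_sum {β : Type*} [Fintype β] [DecidableEq β] (x : κ → 𝒳) (q : κ → β)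
    (a : 𝒳) : ∑ b, occurrences (fun k => (x k, q k)) (a, b) = occurrences x a := by
  rw [occurrences, ← sum_occurrences fun k : {k // x k = a} => q k]
  refine Finset.sum_congr rfl fun b _ => Fintype.card_congr ?_
  exact ((Equiv.subtypeSubtypeEquivSubtypeInter (fun k => x k = a) fun k => q k = b).trans
    (Equiv.subtypeEquivRight fun k => by simp [Prod.ext_iff])).symm

variable [Fintype 𝒳]

/-- The possible joint letter counts of the word `x` and a word of lower triangular positions. -/
def jointTypes (d : ℕ) (x : κ → 𝒳) : Finset (𝒳 → LowerIndex d → ℕ) :=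
  Fintype.piFinset fun a => Finset.piAntidiag Finset.univ (occurrences x a)

theorem occurrences_mem_jointTypes (x : κ → 𝒳) (q : κ → LowerIndex d) :
    (fun a p => occurrences (fun k => (x k, q k)) (a, p)) ∈ jointTypes d x :=
  Fintype.mem_piFinset.2 fun a => Finset.mem_piAntidiag.2
    ⟨occurrences_fst_eq_sum x q a, fun _ _ => Finset.mem_univ _⟩

/-- Lower triangular matrices whose entry at `(i, j)` depends only on the joint type of `x` and
`k ↦ (i k, j k)`. -/
def jointTypeMatrix (d : ℕ) (x : κ → 𝒳) :
    (jointTypes d x → ℂ) →ₗ[ℂ] Matrix (κ → Fin d) (κ → Fin d) ℂ where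
  toFun c := Matrix.of fun i j =>
    if h : ∀ k, j k ≤ i k then c ⟨_, occurrences_mem_jointTypes x fun k => ⟨(i k, j k), h k⟩⟩ else 0
  map_add' c c' := by
    ext i j
    by_cases h : ∀ k, j k ≤ i k <;> simp [h]
  map_smul' r c := by
    ext i j
    by_cases h : ∀ k, j k ≤ i k <;> simp [h]

theorem lowerTensorSpan_le_range_jointTypeMatrix (x : κ → 𝒳) :
    lowerTensorSpan d x ≤ LinearMap.range (jointTypeMatrix d x) := by
  refine Submodule.span_le.2 ?_
  rintro _ ⟨Y, hY, rfl⟩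
  refine ⟨fun m => ∏ a, ∏ p : LowerIndex d, Y a p.1.1 p.1.2 ^ m.1 a p, ?_⟩
  ext i j
  by_cases h : ∀ k, j k ≤ i k
  · have hprod := prod_pow_occurrences (fun k => (x k, (⟨(i k, j k), h k⟩ : LowerIndex d)))
      fun ap => Y ap.1 ap.2.1.1 ap.2.1.2
    simpa [jointTypeMatrix, tensorFam, h, Fintype.prod_prod_type] using hprod.symm
  · obtain ⟨k, hk⟩ := not_forall.1 h
    have hzero : Y (x k) (i k) (j k) = 0 := hY _ (not_le.1 hk)
    simpa [jointTypeMatrix, tensorFam, h] using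
      (Finset.prod_eq_zero (Finset.mem_univ k) hzero).symm

theorem finrank_lowerTensorSpan_le (x : κ → 𝒳) :
    Module.finrank ℂ (lowerTensorSpan d x) ≤
      ∏ a, (Fintype.card (LowerIndex d)).multichoose (occurrences x a) :=
  calc Module.finrank ℂ (lowerTensorSpan d x)
      ≤ Module.finrank ℂ (LinearMap.range (jointTypeMatrix d x)) :=
        Submodule.finrank_mono (lowerTensorSpan_le_range_jointTypeMatrix x)
    _ ≤ Module.finrank ℂ (jointTypes d x → ℂ) := LinearMap.finrank_range_le _
    _ = ∏ a, (Fintype.card (LowerIndex d)).multichoose (occurrences x a) := by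
        rw [Module.finrank_fintype_fun_eq_card, Fintype.card_coe, jointTypes,
          Fintype.card_piFinset]
        simp only [card_piAntidiag_univ]

end LowerTensorSpan

section CardMinimalDecomposition

open scoped Matrix

theorem exists_ne_zero_mulVec_eq_self {m : Type*} [Fintype m] {e : Matrix m m ℂ}
    (he : e * e = e) (hne : e ≠ 0) : ∃ v, v ≠ 0 ∧ e *ᵥ v = v := by
  classical
  obtain ⟨u, hu⟩ : ∃ u, e *ᵥ u ≠ 0 := by
    by_contra! h
    exact hne (Matrix.ext_of_mulVec_single fun i => by simp only [h, Matrix.zero_mulVec])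
  exact ⟨e *ᵥ u, hu, by rw [Matrix.mulVec_mulVec, he]⟩

variable {m ι : Type*} [Fintype m]

/-- The coefficients `⟨v j, c (w j)⟩` of a matrix `c`. -/
def matrixCoefficients (v w : ι → m → ℂ) : Matrix m m ℂ →ₗ[ℂ] (ι → ℂ) where
  toFun c j := star (v j) ⬝ᵥ (c *ᵥ w j)
  map_add' c c' := by
    ext j
    simp [Matrix.add_mulVec, dotProduct_add]
  map_smul' r c := by
    ext j
    simp [Matrix.smul_mulVec, dotProduct_smul]

theorem matrixCoefficients_mul_conjTranspose [DecidableEq m] [DecidableEq ι]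
    {f b : ι → Matrix m m ℂ} {v : ι → m → ℂ} (hf : OrthogonalIdempotents f)
    (hherm : ∀ j, (f j).IsHermitian) (hv : ∀ j, f j *ᵥ v j = v j) (j : ι) :
    matrixCoefficients v (fun j => b j *ᵥ v j) (f j * (b j)ᴴ) =
      Pi.single j (star (b j *ᵥ v j) ⬝ᵥ (b j *ᵥ v j)) := by
  have hvf : ∀ k, star (v k) ᵥ* f k = star (v k) := fun k => by
    rw [← (hherm k).eq, ← Matrix.star_mulVec, hv]
  ext k
  change star (v k) ⬝ᵥ ((f j * (b j)ᴴ) *ᵥ (b k *ᵥ v k)) = _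
  rw [Matrix.dotProduct_mulVec, ← hvf k, Matrix.vecMul_vecMul, ← mul_assoc]
  obtain rfl | hkj := eq_or_ne k j
  · rw [(hf.idem k).eq, ← Matrix.vecMul_vecMul, hvf, ← Matrix.star_mulVec, Pi.single_eq_same]
  · rw [hf.ortho hkj, Pi.single_eq_of_ne hkj]
    simp

theorem submodule_eq_top_of_single_mem [Finite ι] [DecidableEq ι] {W : Submodule ℂ (ι → ℂ)}
    {r : ι → ℂ} (hr : ∀ j, r j ≠ 0) (hW : ∀ j, Pi.single j (r j) ∈ W) : W = ⊤ := by
  cases nonempty_fintype ι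
  refine Submodule.eq_top_iff'.2 fun y => ?_
  have hy : y = ∑ j, (y j / r j) • (Pi.single j (r j) : ι → ℂ) := by
    ext k
    simp [Finset.sum_apply, Pi.single_apply, hr]
  rw [hy]
  exact sum_mem fun j _ => W.smul_mem _ (hW j)

variable {κ 𝒳 : Type*} [Fintype κ] [DecidableEq κ] {d : ℕ} {x : κ → 𝒳}

/-- The upper unitriangular factor of a positive definite matrix does not move the highest weight
vectors `w j`, so only the lower triangular factor contributes. -/
theorem map_colorSpan_le_map_lowerTensorSpan [Finite 𝒳] (v : ι → (κ → Fin d) → ℂ)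
    {w : ι → (κ → Fin d) → ℂ}
    (hw : ∀ j, ∀ N : 𝒳 → Matrix (Fin d) (Fin d) ℂ, (∀ a, IsUpperUnitriangular (N a)) →
      (tensorFam fun k => N (x k)) *ᵥ w j = w j) :
    (colorSpan (Fin d) x).map (matrixCoefficients v w) ≤
      (lowerTensorSpan d x).map (matrixCoefficients v w) := by
  refine Submodule.map_le_iff_le_comap.2 (colorSpan_le_of_posDef fun X hX => ?_)
  choose Y N hXYN hY hN using fun a => exists_eq_lower_mul_isUpperUnitriangular (hX a)
  refine ⟨tensorFam fun k => Y (x k), Submodule.subset_span ⟨Y, hY, rfl⟩, ?_⟩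
  have hfactor : (tensorFam fun k => X (x k)) =
      (tensorFam fun k => Y (x k)) * tensorFam fun k => N (x k) := by
    simp only [tensorFam_mul_tensorFam, ← hXYN]
  ext j
  change star (v j) ⬝ᵥ (tensorFam (fun k => Y (x k)) *ᵥ w j) =
    star (v j) ⬝ᵥ (tensorFam (fun k => X (x k)) *ᵥ w j)
  rw [hfactor, ← Matrix.mulVec_mulVec, hw j N hN]

theorem IsMinimalDecomposition.card_le [Fintype ι] [Fintype 𝒳] [DecidableEq 𝒳]
    {q : Matrix (κ → Fin d) (κ → Fin d) ℂ} {f : ι → Matrix (κ → Fin d) (κ → Fin d) ℂ}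
    (hf : IsMinimalDecomposition (colorAlgebra (Fin d) x) q f) :
    Fintype.card ι ≤ ∏ a, (Fintype.card (LowerIndex d)).multichoose (occurrences x a) := by
  classical
  choose v hv₀ hv using fun j =>
    exists_ne_zero_mulVec_eq_self (hf.isMinimal j).idem (hf.isMinimal j).ne_zero
  choose b hb hbv hfixed using fun j => exists_mulVec_fixed_of_isUpperUnitriangular x (hv₀ j)
  have htop : (lowerTensorSpan d x).map (matrixCoefficients v fun j => b j *ᵥ v j) = ⊤ := by
    refine submodule_eq_top_of_single_mem (fun j => mt dotProduct_star_self_eq_zero.1 (hbv j))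
      fun j => map_colorSpan_le_map_lowerTensorSpan v hfixed ?_
    rw [← matrixCoefficients_mul_conjTranspose hf.toOrthogonalIdempotents
      (fun j => (hf.isMinimal j).isHermitian) hv]
    exact Submodule.mem_map_of_mem
      (mem_colorAlgebra.1 (mul_mem (hf.isMinimal j).mem (star_mem (hb j))))
  calc Fintype.card ι
      = Module.finrank ℂ ((lowerTensorSpan d x).map
          (matrixCoefficients v fun j => b j *ᵥ v j)) := by
        rw [htop, finrank_top, Module.finrank_fintype_fun_eq_card]
    _ ≤ Module.finrank ℂ (lowerTensorSpan d x) := Submodule.finrank_map_le _ _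
    _ ≤ _ := finrank_lowerTensorSpan_le x

end CardMinimalDecomposition

/-! ### Permutation-invariant matrices -/

section Polarization

variable {κ : Type*} [Fintype κ]

theorem sum_eq_zero_of_comp_eq_neg {α : Type*} [Fintype α] (e : Equiv.Perm α) {F : α → ℂ}
    (hF : ∀ a, F (e a) = -F a) : ∑ a, F a = 0 := by
  have hsum := Equiv.sum_comp e F
  rw [Finset.sum_congr rfl fun a _ => hF a, Finset.sum_neg_distrib] at hsum
  exact self_eq_neg.1 hsum.symm

/-- The embedding of the signs `±1` into `ℂ`. -/
def complexSign : ℤˣ →* ℂ := (Int.castRingHom ℂ : ℤ →* ℂ).comp (Units.coeHom ℤ)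

variable [DecidableEq κ]

/-- Flipping the sign at an index missed by `g` changes the sign of the summand. -/
theorem sum_complexSign_eq_zero {g : κ → κ} (hg : ¬ Function.Surjective g) :
    ∑ ε : κ → ℤˣ, complexSign ((∏ k, ε k) * ∏ k, ε (g k)) = 0 := by
  obtain ⟨k₀, hk₀⟩ := not_forall.1 hg
  refine sum_eq_zero_of_comp_eq_neg (Equiv.mulRight (Pi.mulSingle k₀ (-1))) fun ε => ?_
  have hmiss : ∀ k, (Pi.mulSingle k₀ (-1) : κ → ℤˣ) (g k) = 1 := fun k =>
    Pi.mulSingle_eq_of_ne (fun h => hk₀ ⟨k, h⟩) _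
  simp [Finset.prod_mul_distrib, hmiss, complexSign]

theorem sum_complexSign_perm (π : Equiv.Perm κ) :
    ∑ ε : κ → ℤˣ, complexSign ((∏ k, ε k) * ∏ k, ε (π k)) = 2 ^ Fintype.card κ := by
  simp only [Equiv.prod_comp π, Int.units_mul_self, map_one]
  simp

variable {δ : Type*}

theorem sum_complexSign_smul_tensorFam (M : κ → Matrix δ δ ℂ) :
    ∑ ε : κ → ℤˣ, complexSign (∏ k, ε k) • tensorFam (fun _ : κ => ∑ l, complexSign (ε l) • M l) =
      (2 : ℂ) ^ Fintype.card κ • ∑ π : Equiv.Perm κ, tensorFam fun k => M (π k) := by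
  calc _ = ∑ g : κ → κ, (∑ ε : κ → ℤˣ, complexSign ((∏ k, ε k) * ∏ k, ε (g k))) •
          tensorFam fun k => M (g k) := by
        simp only [tensorFam_sum, tensorFam_smul, Finset.smul_sum, smul_smul, Finset.sum_smul,
          ← map_prod, ← map_mul]
        exact Finset.sum_comm
    _ = ∑ π : Equiv.Perm κ, (2 : ℂ) ^ Fintype.card κ • tensorFam fun k => M (π k) := by
        refine (Finset.sum_of_injOn (fun π : Equiv.Perm κ => (π : κ → κ))
          DFunLike.coe_injective.injOn (fun _ _ => by simp) (fun g _ hg => ?_)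
          fun π _ => by rw [sum_complexSign_perm]).symm
        rw [sum_complexSign_eq_zero, zero_smul]
        exact fun hsurj => hg
          ⟨Equiv.ofBijective g (Finite.surjective_iff_bijective.1 hsurj), by simp, rfl⟩
    _ = _ := Finset.smul_sum.symm

theorem sum_perm_tensorFam_mem_colorAlgebra [Fintype δ] [DecidableEq δ] (M : κ → Matrix δ δ ℂ) :
    ∑ π : Equiv.Perm κ, tensorFam (fun k => M (π k)) ∈ colorAlgebra δ fun _ : κ => () := by
  have h2 : (2 : ℂ) ^ Fintype.card κ ≠ 0 := by positivity
  rw [← inv_smul_smul₀ h2 (∑ π : Equiv.Perm κ, _), ← sum_complexSign_smul_tensorFam]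
  exact (colorAlgebra δ _).smul_mem (sum_mem fun ε _ => (colorAlgebra δ _).smul_mem
    (tensorFam_mem_colorAlgebra (fun _ : κ => ()) fun _ => ∑ l, complexSign (ε l) • M l) _) _

end Polarization

section PermAverage

variable {κ δ 𝒳 : Type*} [Fintype κ] [DecidableEq δ]

theorem single_eq_tensorFam (i j : κ → δ) :
    Matrix.single i j (1 : ℂ) = tensorFam fun k => Matrix.single (i k) (j k) 1 := by
  ext a b
  simp [tensorFam, Matrix.single_apply, Finset.prod_ite_zero, funext_iff, forall_and]

variable [DecidableEq κ] [Fintype δ]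

/-- The action of a permutation on the tensor factors, `A ↦ U_π A U_π*`. -/
def permuteFactors (π : Equiv.Perm κ) :
    Matrix (κ → δ) (κ → δ) ℂ ≃ₐ[ℂ] Matrix (κ → δ) (κ → δ) ℂ :=
  Matrix.reindexAlgEquiv ℂ ℂ (Equiv.arrowCongr π (Equiv.refl δ))

theorem permuteFactors_tensorFam (π : Equiv.Perm κ) (X : κ → Matrix δ δ ℂ) :
    permuteFactors π (tensorFam X) = tensorFam fun k => X (π.symm k) := by
  ext i j
  exact Fintype.prod_equiv π _ _ fun k => by simp [Equiv.arrowCongr]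

theorem permuteFactors_permuteFactors_inv (π : Equiv.Perm κ) (A : Matrix (κ → δ) (κ → δ) ℂ) :
    permuteFactors π (permuteFactors π⁻¹ A) = A :=
  (permuteFactors π).apply_symm_apply A

theorem trace_permuteFactors (π : Equiv.Perm κ) (A : Matrix (κ → δ) (κ → δ) ℂ) :
    (permuteFactors π A).trace = A.trace :=
  Equiv.sum_comp (Equiv.arrowCongr π (Equiv.refl δ)).symm fun i => A i i

theorem posSemidef_permuteFactors (π : Equiv.Perm κ) {A : Matrix (κ → δ) (κ → δ) ℂ}
    (hA : A.PosSemidef) : (permuteFactors π A).PosSemidef :=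
  hA.submatrix _

theorem sum_permuteFactors_mem_colorAlgebra (A : Matrix (κ → δ) (κ → δ) ℂ) :
    ∑ π : Equiv.Perm κ, permuteFactors π A ∈ colorAlgebra δ fun _ : κ => () := by
  induction A using Matrix.induction_on' with
  | h_zero => simp
  | h_add A B hA hB => simpa only [map_add, Finset.sum_add_distrib] using add_mem hA hB
  | h_std_basis i j c =>
    rw [← mul_one c, ← smul_eq_mul, ← Matrix.smul_single, single_eq_tensorFam]
    simp only [map_smul, permuteFactors_tensorFam, ← Finset.smul_sum]
    refine (colorAlgebra δ _).smul_mem ?_ c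
    have hmem := sum_perm_tensorFam_mem_colorAlgebra fun k => Matrix.single (i k) (j k) (1 : ℂ)
    rwa [← Equiv.sum_comp (Equiv.inv (Equiv.Perm κ))] at hmem

/-- The average of a family of matrices, indexed by words over `𝒳`, over the simultaneous
permutations of the letters of the word and of the tensor factors. -/
def permAverage (T : (κ → 𝒳) → Matrix (κ → δ) (κ → δ) ℂ) (x : κ → 𝒳) :
    Matrix (κ → δ) (κ → δ) ℂ :=
  (Fintype.card (Equiv.Perm κ) : ℂ)⁻¹ • ∑ π : Equiv.Perm κ, permuteFactors π (T (x ∘ π))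

theorem posSemidef_permAverage {T : (κ → 𝒳) → Matrix (κ → δ) (κ → δ) ℂ}
    (hT : ∀ x, (T x).PosSemidef) (x : κ → 𝒳) : (permAverage T x).PosSemidef :=
  (Matrix.posSemidef_sum _ fun π _ => posSemidef_permuteFactors π (hT _)).smul
    (by positivity)

theorem one_sub_permAverage (T : (κ → 𝒳) → Matrix (κ → δ) (κ → δ) ℂ) (x : κ → 𝒳) :
    1 - permAverage T x = permAverage (fun y => 1 - T y) x := by
  have hcard : (Fintype.card (Equiv.Perm κ) : ℂ) ≠ 0 := Nat.cast_ne_zero.2 Fintype.card_ne_zero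
  simp only [permAverage, map_sub, map_one, Finset.sum_sub_distrib, smul_sub, Finset.sum_const,
    Finset.card_univ, ← Nat.cast_smul_eq_nsmul ℂ, inv_smul_smul₀ hcard]

theorem isDensity_permAverage_const {σ : Matrix (κ → δ) (κ → δ) ℂ} (hσ : IsDensity σ)
    (x : κ → 𝒳) : IsDensity (permAverage (fun _ => σ) x) := by
  refine ⟨posSemidef_permAverage (fun _ => hσ.1) x, ?_⟩
  simp [permAverage, Matrix.trace_sum, hσ.2]

theorem permAverage_const_mem_colorAlgebra (σ : Matrix (κ → δ) (κ → δ) ℂ) (x : κ → 𝒳) :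
    permAverage (fun _ => σ) x ∈ colorAlgebra δ fun _ : κ => () :=
  (colorAlgebra δ _).smul_mem (sum_permuteFactors_mem_colorAlgebra σ) _

theorem trace_permuteFactors_mul (π : Equiv.Perm κ) (A B : Matrix (κ → δ) (κ → δ) ℂ) :
    (permuteFactors π A * B).trace = (A * permuteFactors π⁻¹ B).trace := by
  rw [← trace_permuteFactors π (A * _), map_mul, permuteFactors_permuteFactors_inv]

/-- The average over permutations is self-adjoint for the trace pairing weighted by `w`. -/
theorem sum_trace_permAverage_mul [Fintype 𝒳] {w : (κ → 𝒳) → ℂ}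
    (hw : ∀ (π : Equiv.Perm κ) x, w (x ∘ π) = w x)
    (T A : (κ → 𝒳) → Matrix (κ → δ) (κ → δ) ℂ) :
    ∑ x, w x * (permAverage T x * A x).trace = ∑ x, w x * (T x * permAverage A x).trace := by
  have hswap : ∀ π : Equiv.Perm κ, ∑ x, w x * (permuteFactors π (T (x ∘ π)) * A x).trace =
      ∑ x, w x * (T x * permuteFactors π⁻¹ (A (x ∘ ⇑π⁻¹))).trace := fun π =>
    Fintype.sum_equiv (Equiv.arrowCongr π⁻¹ (Equiv.refl 𝒳)) _ _ fun x => by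
      have hπ : Equiv.arrowCongr π⁻¹ (Equiv.refl 𝒳) x = x ∘ π := rfl
      rw [hπ, hw, trace_permuteFactors_mul, Function.comp_assoc]
      simp
  simp only [permAverage, Matrix.smul_mul, Matrix.mul_smul, Matrix.trace_smul, Matrix.sum_mul,
    Matrix.mul_sum, Matrix.trace_sum, smul_eq_mul, mul_left_comm (w _) _⁻¹]
  rw [← Finset.mul_sum, ← Finset.mul_sum]
  congr 1
  simp only [Finset.mul_sum]
  rw [Finset.sum_comm, Finset.sum_congr rfl fun π _ => hswap π, Finset.sum_comm]
  exact Finset.sum_congr rfl fun x _ => Equiv.sum_comp (Equiv.inv (Equiv.Perm κ))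
    fun π => w x * (T x * permuteFactors π (A (x ∘ π))).trace

end PermAverage

/-! ### The method of types -/

section MethodOfTypes

open scoped Nat

theorem pow_mul_factorial_le (m j : ℕ) : m ^ j * m ! ≤ m ^ m * j ! := by
  rcases le_total j m with hjm | hmj
  · calc m ^ j * m ! = m ^ j * (j ! * m.descFactorial (m - j)) := by
          rw [← Nat.factorial_mul_descFactorial (Nat.sub_le m j), Nat.sub_sub_self hjm]
      _ ≤ m ^ j * (j ! * m ^ (m - j)) := by gcongr; exact Nat.descFactorial_le_pow m _
      _ = m ^ m * j ! := by rw [mul_left_comm, ← pow_add, Nat.add_sub_cancel' hjm, mul_comm]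
  · calc m ^ j * m ! = m ^ m * (m ! * m ^ (j - m)) := by
          rw [mul_left_comm, ← pow_add, Nat.add_sub_cancel' hmj, mul_comm]
      _ ≤ m ^ m * j ! := by gcongr; exact Nat.factorial_mul_pow_sub_le_factorial hmj

theorem multichoose_succ_le_pow (r m : ℕ) : (r + 1).multichoose m ≤ (m + 1) ^ r := by
  induction r generalizing m with
  | zero => simp
  | succ r ihr =>
    induction m with
    | zero => simp
    | succ m ihm =>
      calc (r + 1 + 1).multichoose (m + 1)
          = (r + 1).multichoose (m + 1) + (r + 1 + 1).multichoose m :=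
            Nat.multichoose_succ_succ _ _
        _ ≤ (m + 1 + 1) ^ r + (m + 1) * (m + 1) ^ r := by
            rw [← pow_succ']; exact add_le_add (ihr _) ihm
        _ ≤ (m + 1 + 1) ^ r + (m + 1) * (m + 1 + 1) ^ r := by gcongr; omega
        _ = (m + 1 + 1) ^ (r + 1) := by ring

/-- Each term of the multinomial expansion of `(∑ c) ^ (∑ c)` is at most the term of type `c`. -/
theorem pow_sum_mul_prod_factorial_le {𝒮 : Type*} [Fintype 𝒮] [Nonempty 𝒮] (c : 𝒮 → ℕ) :
    (∑ s, c s) ^ (∑ s, c s) * ∏ s, (c s)! ≤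
      (∑ s, c s + 1) ^ (Fintype.card 𝒮 - 1) * ((∑ s, c s)! * ∏ s, c s ^ c s) := by
  classical
  set n := ∑ s, c s
  have hterm : ∀ k ∈ Finset.piAntidiag Finset.univ n,
      Nat.multinomial Finset.univ k * (∏ s, c s ^ k s) * ∏ s, (c s)! ≤ n ! * ∏ s, c s ^ c s := by
    intro k hk
    calc Nat.multinomial Finset.univ k * (∏ s, c s ^ k s) * ∏ s, (c s)!
        = Nat.multinomial Finset.univ k * ∏ s, c s ^ k s * (c s)! := by
          rw [mul_assoc, Finset.prod_mul_distrib]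
      _ ≤ Nat.multinomial Finset.univ k * ∏ s, c s ^ c s * (k s)! :=
          Nat.mul_le_mul_left _ (Finset.prod_le_prod' fun s _ => pow_mul_factorial_le _ _)
      _ = n ! * ∏ s, c s ^ c s := by
          rw [← (Finset.mem_piAntidiag.1 hk).1, ← Nat.multinomial_spec Finset.univ k,
            Finset.prod_mul_distrib]
          ring
  have htypes : (Fintype.card 𝒮).multichoose n ≤ (n + 1) ^ (Fintype.card 𝒮 - 1) := by
    simpa [Nat.sub_add_cancel Fintype.card_pos] using multichoose_succ_le_pow (Fintype.card 𝒮 - 1) n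
  rw [Finset.sum_pow_eq_sum_piAntidiag, Finset.sum_mul]
  refine (Finset.sum_le_card_nsmul _ _ _ hterm).trans ?_
  rw [card_piAntidiag_univ, smul_eq_mul]
  gcongr

variable {𝒮 κ : Type*} [DecidableEq 𝒮] [Fintype κ]

/-- The type of a word `s`, i.e. the distribution of its letters. -/
def empirical (s : κ → 𝒮) (a : 𝒮) : ℝ := occurrences s a / Fintype.card κ

theorem empirical_nonneg (s : κ → 𝒮) (a : 𝒮) : 0 ≤ empirical s a := by
  unfold empirical; positivity

variable [Fintype 𝒮]

theorem sum_empirical [Nonempty κ] (s : κ → 𝒮) : ∑ a, empirical s a = 1 := by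
  simp only [empirical, ← Finset.sum_div, ← Nat.cast_sum, sum_occurrences]
  exact div_self (by simp)

theorem prod_factorial_occurrences_le [Nonempty 𝒮] (s : κ → 𝒮) :
    (∏ a, ((occurrences s a)! : ℝ)) ≤ (Fintype.card κ)! *
      ((Fintype.card κ : ℝ) + 1) ^ (Fintype.card 𝒮 - 1) * ∏ k, empirical s (s k) := by
  have htype : ∏ k, empirical s (s k) =
      (∏ a, (occurrences s a : ℝ) ^ occurrences s a) /
        (Fintype.card κ : ℝ) ^ Fintype.card κ := by
    rw [prod_pow_occurrences]
    simp only [empirical, div_pow]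
    rw [Finset.prod_div_distrib, Finset.prod_pow_eq_pow_sum, sum_occurrences]
  have hpos : (0 : ℝ) < (Fintype.card κ : ℝ) ^ Fintype.card κ := mod_cast Nat.pow_self_pos
  have hcount := pow_sum_mul_prod_factorial_le (occurrences s)
  rw [sum_occurrences] at hcount
  rw [htype, mul_div_assoc', le_div_iff₀ hpos]
  calc (∏ a, ((occurrences s a)! : ℝ)) * (Fintype.card κ : ℝ) ^ Fintype.card κ
      = (Fintype.card κ : ℝ) ^ Fintype.card κ * ∏ a, ((occurrences s a)! : ℝ) := mul_comm _ _
    _ ≤ ((Fintype.card κ : ℝ) + 1) ^ (Fintype.card 𝒮 - 1) *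
        ((Fintype.card κ)! * ∏ a, (occurrences s a : ℝ) ^ occurrences s a) := mod_cast hcount
    _ = _ := by ring

variable [DecidableEq κ]

theorem card_filter_comp_perm_eq_le (s s' : κ → 𝒮) :
    (Finset.univ.filter fun π : Equiv.Perm κ => s ∘ π = s').card ≤ ∏ a, (occurrences s a)! := by
  by_cases h : ∃ π₀ : Equiv.Perm κ, s ∘ π₀ = s'
  · obtain ⟨π₀, rfl⟩ := h
    have hstab := DomMulAct.stabilizer_card s
    rw [Fintype.card_subtype] at hstab
    refine le_trans ?_ hstab.le
    refine Finset.card_le_card_of_injOn (fun π => π * π₀⁻¹) (fun π hπ => ?_)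
      (mul_left_injective π₀⁻¹).injOn
    simp only [Finset.coe_filter, Finset.mem_univ, true_and, Set.mem_ofPred_eq] at hπ ⊢
    funext k
    simpa using congrFun hπ (π₀⁻¹ k)
  · rw [Finset.filter_false_of_mem fun π _ hπ => h ⟨π, hπ⟩]
    simp

theorem sum_comp_perm_le [Nonempty 𝒮] (s : κ → 𝒮) (F : (κ → 𝒮) → ℝ) (hF : ∀ s', 0 ≤ F s') :
    ∑ π : Equiv.Perm κ, F (s ∘ π) ≤
      (Fintype.card κ)! * ((Fintype.card κ : ℝ) + 1) ^ (Fintype.card 𝒮 - 1) *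
        ∑ s' : κ → 𝒮, (∏ k, empirical s (s' k)) * F s' := by
  rw [← Finset.sum_fiberwise (g := fun π : Equiv.Perm κ => s ∘ π), Finset.mul_sum]
  refine Finset.sum_le_sum fun s' _ => ?_
  by_cases h : ∃ π₀ : Equiv.Perm κ, s ∘ π₀ = s'
  · obtain ⟨π₀, rfl⟩ := h
    have hprod : ∏ k, empirical s ((s ∘ π₀) k) = ∏ k, empirical s (s k) :=
      Equiv.prod_comp π₀ fun k => empirical s (s k)
    rw [Finset.sum_congr rfl fun π hπ => congrArg F (Finset.mem_filter.1 hπ).2, Finset.sum_const,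
      nsmul_eq_mul, ← mul_assoc, hprod]
    refine mul_le_mul_of_nonneg_right (le_trans ?_ (prod_factorial_occurrences_le s)) (hF _)
    exact_mod_cast card_filter_comp_perm_eq_le s (s ∘ π₀)
  · rw [Finset.filter_false_of_mem fun π _ hπ => h ⟨π, hπ⟩, Finset.sum_empty]
    have := Finset.univ.prod_nonneg fun k _ => empirical_nonneg s (s' k)
    have := hF s'
    positivity

end MethodOfTypes

/-! ### Polynomial bounds for the number of minimal projections -/

section PolynomialBounds

open scoped Nat

theorem exists_perm_comp_eq_of_map_univ_eq {α β : Type*} [Fintype α] {f g : α → β}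
    (h : Multiset.map f Finset.univ.val = Multiset.map g Finset.univ.val) :
    ∃ π : Equiv.Perm α, g ∘ π = f := by
  classical
  have hcard (v : β) : Fintype.card {a // f a = v} = Fintype.card {a // g a = v} := by
    have hcount := congrArg (Multiset.count v) h
    rw [Multiset.count_map, Multiset.count_map] at hcount
    simpa [Fintype.card_subtype, Finset.card_def, Finset.filter_val, eq_comm] using hcount
  exact ⟨Equiv.ofFiberEquiv fun v => Fintype.equivOfCardEq (hcard v),
    funext fun a => Equiv.ofFiberEquiv_map _ a⟩

theorem eq_of_filter_ne_zero_eq {a b : Multiset ℕ} (hcard : a.card = b.card)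
    (h : a.filter (· ≠ 0) = b.filter (· ≠ 0)) : a = b := by
  have hsplit (c : Multiset ℕ) :
      c = c.filter (· ≠ 0) + Multiset.replicate (c.card - (c.filter (· ≠ 0)).card) 0 := by
    have hzero : c.filter (¬ · ≠ 0) = Multiset.replicate (c.filter (¬ · ≠ 0)).card 0 :=
      Multiset.eq_replicate_card.2 fun v hv => not_not.1 (Multiset.mem_filter.1 hv).2
    have hc := Multiset.filter_add_not (· ≠ 0) c
    have hlen := congrArg Multiset.card hc
    rw [Multiset.card_add] at hlen
    rw [← hlen, Nat.add_sub_cancel_left, ← hzero, hc]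
  rw [hsplit a, hsplit b, h, hcard]

theorem multichoose_le_factorial_mul_numPartLe (n d : ℕ) :
    d.multichoose n ≤ d ! * numPartLe n d := by
  classical
  let tuples := Finset.piAntidiag (Finset.univ : Finset (Fin d)) n
  let parts (f : Fin d → ℕ) : Multiset ℕ := (Multiset.map f Finset.univ.val).filter (· ≠ 0)
  have himage : (tuples.image parts).card ≤ numPartLe n d := by
    have hsub : tuples.image parts ⊆ Finset.univ.image
        fun p : {p : n.Partition // p.parts.card ≤ d} => p.1.parts := by
      refine Finset.image_subset_iff.2 fun f hf => Finset.mem_image.2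
        ⟨⟨Nat.Partition.ofSums n (Multiset.map f Finset.univ.val)
          (Finset.mem_piAntidiag.1 hf).1, ?_⟩, Finset.mem_univ _, rfl⟩
      exact (Multiset.card_le_card (Multiset.filter_le _ _)).trans_eq
        ((Multiset.card_map _ _).trans (Finset.card_fin d))
    rw [numPartLe, Nat.card_eq_fintype_card]
    exact (Finset.card_le_card hsub).trans Finset.card_image_le
  have hfiber : ∀ p ∈ tuples.image parts, (tuples.filter (parts · = p)).card ≤ d ! := by
    intro p hp
    obtain ⟨g, -, rfl⟩ := Finset.mem_image.1 hp
    have hsub : tuples.filter (parts · = parts g) ⊆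
        Finset.univ.image fun π : Equiv.Perm (Fin d) => g ∘ ⇑π := fun f hf => by
      obtain ⟨π, hπ⟩ := exists_perm_comp_eq_of_map_univ_eq
        (eq_of_filter_ne_zero_eq (by simp) (Finset.mem_filter.1 hf).2)
      exact Finset.mem_image.2 ⟨π, Finset.mem_univ _, hπ⟩
    refine (Finset.card_le_card hsub).trans (Finset.card_image_le.trans ?_)
    rw [Finset.card_univ, Fintype.card_perm, Fintype.card_fin]
  calc d.multichoose n = tuples.card := by rw [card_piAntidiag_univ, Fintype.card_fin]
    _ ≤ d ! * (tuples.image parts).card := Finset.card_le_mul_card_image tuples (d !) hfiber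
    _ ≤ d ! * numPartLe n d := Nat.mul_le_mul_left _ himage

theorem numPartLe_pos {d : ℕ} (hd : 1 ≤ d) (n : ℕ) : 0 < numPartLe n d := by
  have hchoose : 0 < d.multichoose n := by
    rw [Nat.multichoose_eq]
    exact Nat.choose_pos (by omega)
  exact pos_of_mul_pos_right (hchoose.trans_le (multichoose_le_factorial_mul_numPartLe n d))
    (Nat.zero_le _)

theorem multichoose_succ_mul (r n : ℕ) :
    (r + 1).multichoose n * r = r.multichoose n * (n + r) := by
  cases r with
  | zero => cases n <;> simp
  | succ r =>
    have h := Nat.choose_mul_succ_eq (r + n) n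
    rw [show r + n + 1 - n = r + 1 by omega] at h
    rw [Nat.multichoose_eq, Nat.multichoose_eq, show r + 1 + n - 1 = r + n by omega,
      show r + 1 + 1 + n - 1 = r + n + 1 by omega, ← h]
    ring

theorem multichoose_add_le {d n : ℕ} (hd : 2 ≤ d) (hn : 2 ≤ n) (b : ℕ) :
    (d + b).multichoose n ≤ n ^ b * d.multichoose n := by
  induction b with
  | zero => simp
  | succ b ih =>
    have hstep : (d + b + 1).multichoose n ≤ n * (d + b).multichoose n := by
      refine Nat.le_of_mul_le_mul_right ?_ (show 0 < d + b by omega)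
      calc (d + b + 1).multichoose n * (d + b) = (d + b).multichoose n * (n + (d + b)) :=
            multichoose_succ_mul _ _
        _ ≤ (d + b).multichoose n * (n * (d + b)) := by gcongr; nlinarith
        _ = n * (d + b).multichoose n * (d + b) := by ring
    calc (d + (b + 1)).multichoose n ≤ n * (d + b).multichoose n := hstep
      _ ≤ n * (n ^ b * d.multichoose n) := by gcongr
      _ = n ^ (b + 1) * d.multichoose n := by ring

theorem card_lowerIndex (d : ℕ) : Fintype.card (LowerIndex d) = d + d.choose 2 := by
  have hrow (i : Fin d) : Fintype.card {j // j ≤ i} = i + 1 := by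
    rw [Fintype.card_subtype, Finset.filter_ge_eq_Iic, Fin.card_Iic]
  rw [Fintype.card_congr (Equiv.subtypeProdEquivSigmaSubtype fun i j : Fin d => j ≤ i),
    Fintype.card_sigma, Finset.sum_congr rfl fun i _ => hrow i, Finset.sum_add_distrib,
    Fin.sum_univ_eq_sum_range fun i => i, Finset.sum_range_id, Nat.choose_two_right]
  simp [add_comm]

theorem factorial_mul_four_pow_le (d : ℕ) :
    (d + 1)! * 4 ^ (d + (d + 1).choose 2) ≤ 9 ^ (d + (d + 1).choose 2) := by
  induction d with
  | zero => simp
  | succ d ih =>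
    set α := d + (d + 1).choose 2 with hα
    have hsucc : d + 1 + (d + 1 + 1).choose 2 = α + (d + 2) := by
      rw [Nat.choose_succ_succ' (d + 1) 1, Nat.choose_one_right, hα]
      ring
    rw [hsucc]
    calc (d + 1 + 1)! * 4 ^ (α + (d + 2))
        = ((d + 1)! * 4 ^ α) * ((d + 2) * 4 ^ (d + 2)) := by
          rw [Nat.factorial_succ (d + 1), pow_add]; ring
      _ ≤ 9 ^ α * (2 ^ (d + 2) * 4 ^ (d + 2)) := by gcongr; exact Nat.lt_two_pow_self.le
      _ = 9 ^ α * 8 ^ (d + 2) := by rw [← mul_pow]; norm_num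
      _ ≤ 9 ^ (α + (d + 2)) := by
          rw [pow_add 9 α]
          exact Nat.mul_le_mul_left _ (Nat.pow_le_pow_left (show 8 ≤ 9 by norm_num) _)

theorem factorial_mul_sq_pow_le {d n : ℕ} (hn : 2 ≤ n) :
    (d + 1)! * ((n + 2) ^ 2) ^ (d + (d + 1).choose 2) ≤
      4 ^ (d + (d + 1).choose 2) * (n + 1) ^ (2 * (d + (d + 1).choose 2)) := by
  have hfact := factorial_mul_four_pow_le d
  set α := d + (d + 1).choose 2
  have hbase : 9 * (n + 2) ^ 2 ≤ 16 * (n + 1) ^ 2 := by nlinarith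
  refine Nat.le_of_mul_le_mul_right ?_ (show 0 < 9 ^ α by positivity)
  calc (d + 1)! * ((n + 2) ^ 2) ^ α * 9 ^ α = (d + 1)! * (9 * (n + 2) ^ 2) ^ α := by
        rw [mul_pow]; ring
    _ ≤ (d + 1)! * (16 * (n + 1) ^ 2) ^ α := by gcongr
    _ = ((d + 1)! * 4 ^ α) * (4 ^ α * (n + 1) ^ (2 * α)) := by
        rw [mul_pow, pow_mul (n + 1), show 16 = 4 * 4 from rfl, mul_pow]; ring
    _ ≤ 9 ^ α * (4 ^ α * (n + 1) ^ (2 * α)) := by gcongr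
    _ = 4 ^ α * (n + 1) ^ (2 * α) * 9 ^ α := mul_comm _ _

theorem multichoose_mul_pow_le_of_two_le {d n p : ℕ} (hd : 1 ≤ d) (hn : 2 ≤ n)
    (hp : 4 * p ≤ (n + 2) ^ 2) :
    (d + 1 + (d + 1).choose 2).multichoose n * p ^ (d + (d + 1).choose 2) ≤
      n ^ (d + 1).choose 2 * numPartLe n (d + 1) * (n + 1) ^ (2 * (d + (d + 1).choose 2)) := by
  have hpow := factorial_mul_sq_pow_le (d := d) hn
  have hcount := (multichoose_add_le (by omega) hn ((d + 1).choose 2)).trans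
    (Nat.mul_le_mul_left _ (multichoose_le_factorial_mul_numPartLe n (d + 1)))
  set b := (d + 1).choose 2
  refine Nat.le_of_mul_le_mul_right ?_ (show 0 < 4 ^ (d + b) by positivity)
  calc (d + 1 + b).multichoose n * p ^ (d + b) * 4 ^ (d + b)
      = (d + 1 + b).multichoose n * (4 * p) ^ (d + b) := by rw [mul_pow]; ring
    _ ≤ n ^ b * ((d + 1)! * numPartLe n (d + 1)) * ((n + 2) ^ 2) ^ (d + b) := by gcongr
    _ = n ^ b * numPartLe n (d + 1) * ((d + 1)! * ((n + 2) ^ 2) ^ (d + b)) := by ring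
    _ ≤ n ^ b * numPartLe n (d + 1) * (4 ^ (d + b) * (n + 1) ^ (2 * (d + b))) := by gcongr
    _ = _ := by ring

theorem multichoose_mul_pow_le {n p : ℕ} (d : ℕ) (hn : 1 ≤ n) (hp : 4 * p ≤ (n + 2) ^ 2) :
    (d + 1 + (d + 1).choose 2).multichoose n * p ^ (d + (d + 1).choose 2) ≤
      n ^ (d + 1).choose 2 * numPartLe n (d + 1) * (n + 1) ^ (2 * (d + (d + 1).choose 2)) := by
  have hpart := numPartLe_pos (Nat.le_add_left 1 d) n
  rcases Nat.eq_zero_or_pos d with rfl | hd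
  · simpa [Nat.one_le_iff_ne_zero] using hpart.ne'
  rcases hn.eq_or_lt with rfl | hn
  · have hp2 : p ≤ 2 := by omega
    set b := (d + 1).choose 2
    calc (d + 1 + b).multichoose 1 * p ^ (d + b) ≤ (1 + 1) ^ (d + b) * 2 ^ (d + b) := by
          gcongr
          rw [add_right_comm]
          exact multichoose_succ_le_pow _ _
      _ = 1 * (1 + 1) ^ (2 * (d + b)) := by rw [two_mul, pow_add _ (d + b), one_mul]
      _ ≤ 1 ^ b * numPartLe 1 (d + 1) * (1 + 1) ^ (2 * (d + b)) := by
          gcongr; rwa [one_pow, one_mul]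
  · exact multichoose_mul_pow_le_of_two_le hd hn hp

variable {κ 𝒳 : Type*} [Fintype κ] [Fintype 𝒳] [DecidableEq 𝒳]

theorem exists_prod_occurrences_succ_le (h𝒳 : 2 ≤ Fintype.card 𝒳) (x : κ → 𝒳) :
    ∃ p, 4 * p ≤ (Fintype.card κ + 2) ^ 2 ∧
      ∏ a, (occurrences x a + 1) ≤ p * (Fintype.card κ + 1) ^ (Fintype.card 𝒳 - 2) := by
  obtain ⟨a, b, hab⟩ := Fintype.exists_pair_of_one_lt_card h𝒳
  have hsum : occurrences x a + occurrences x b ≤ Fintype.card κ := by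
    rw [← sum_occurrences x, ← Finset.sum_pair hab]
    exact Finset.sum_le_sum_of_subset (Finset.subset_univ _)
  refine ⟨(occurrences x a + 1) * (occurrences x b + 1), ?_, ?_⟩
  · calc 4 * ((occurrences x a + 1) * (occurrences x b + 1))
        ≤ (occurrences x a + occurrences x b + 2) ^ 2 := by
          zify; nlinarith [sq_nonneg ((occurrences x a : ℤ) - occurrences x b)]
      _ ≤ (Fintype.card κ + 2) ^ 2 := by gcongr
  · rw [← Finset.prod_sdiff (Finset.subset_univ {a, b}), Finset.prod_pair hab, mul_comm]
    gcongr
    refine (Finset.prod_le_pow_card _ _ (Fintype.card κ + 1) fun c _ => ?_).trans ?_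
    · exact Nat.succ_le_succ (Fintype.card_subtype_le _)
    · rw [Finset.card_univ_sdiff, Finset.card_pair hab]

theorem multichoose_card_mul_prod_multichoose_le [Nonempty κ] (h𝒳 : 2 ≤ Fintype.card 𝒳)
    (d : ℕ) (x : κ → 𝒳) :
    (Fintype.card (LowerIndex (d + 1))).multichoose (Fintype.card κ) *
        ∏ a, (Fintype.card (LowerIndex (d + 1))).multichoose (occurrences x a) ≤
      Fintype.card κ ^ (d + 1).choose 2 * numPartLe (Fintype.card κ) (d + 1) *
        (Fintype.card κ + 1) ^ (Fintype.card 𝒳 * (d + (d + 1).choose 2)) := by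
  obtain ⟨p, hp, hprod⟩ := exists_prod_occurrences_succ_le h𝒳 x
  have hpair := multichoose_mul_pow_le d (Fintype.card_pos (α := κ)) hp
  obtain ⟨q, hq⟩ := Nat.exists_eq_add_of_le h𝒳
  rw [hq, Nat.add_sub_cancel_left] at hprod
  rw [card_lowerIndex, hq]
  set n := Fintype.card κ
  set b := (d + 1).choose 2
  calc (d + 1 + b).multichoose n * ∏ a, (d + 1 + b).multichoose (occurrences x a)
      ≤ (d + 1 + b).multichoose n * ∏ a, (occurrences x a + 1) ^ (d + b) := by
        gcongr
        rw [add_right_comm]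
        exact multichoose_succ_le_pow _ _
    _ ≤ (d + 1 + b).multichoose n * (p * (n + 1) ^ q) ^ (d + b) := by
        rw [Finset.prod_pow]; gcongr
    _ = ((d + 1 + b).multichoose n * p ^ (d + b)) * (n + 1) ^ (q * (d + b)) := by
        rw [mul_pow, ← pow_mul, mul_assoc]
    _ ≤ (n ^ b * numPartLe n (d + 1) * (n + 1) ^ (2 * (d + b))) * (n + 1) ^ (q * (d + b)) := by
        gcongr
    _ = n ^ b * numPartLe n (d + 1) * (n + 1) ^ ((2 + q) * (d + b)) := by ring

end PolynomialBounds

/-! ### Matrix powers -/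

section MatrixPowers

/-- The scalar power `u ^ r` on the support `u > 0`, extended by `0`; `mpow` applies it to the
eigenvalues. -/
def supportRpow (r u : ℝ) : ℝ := if u ≤ 0 then 0 else u ^ r

theorem supportRpow_of_pos {r u : ℝ} (hu : 0 < u) : supportRpow r u = u ^ r :=
  if_neg hu.not_ge

theorem supportRpow_nonneg (r u : ℝ) : 0 ≤ supportRpow r u := by
  unfold supportRpow
  split_ifs with hu
  exacts [le_rfl, Real.rpow_nonneg (not_le.1 hu).le r]

theorem supportRpow_eq_rpow {r u : ℝ} (hr : 0 < r) (hu : 0 ≤ u) : supportRpow r u = u ^ r := by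
  rcases hu.eq_or_lt with rfl | hu
  · simp [supportRpow, Real.zero_rpow hr.ne']
  · exact supportRpow_of_pos hu

theorem supportRpow_prod {κ : Type*} [Fintype κ] (r : ℝ) {u : κ → ℝ} (hu : ∀ k, 0 ≤ u k) :
    supportRpow r (∏ k, u k) = ∏ k, supportRpow r (u k) := by
  by_cases h : ∃ k, u k = 0
  · obtain ⟨k, hk⟩ := h
    rw [Finset.prod_eq_zero (Finset.mem_univ k) hk,
      Finset.prod_eq_zero (Finset.mem_univ k) (by simp [hk, supportRpow])]
    simp [supportRpow]
  · have hpos (k : κ) : 0 < u k := (hu k).lt_of_ne fun hk => h ⟨k, hk.symm⟩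
    rw [supportRpow_of_pos (Finset.prod_pos fun k _ => hpos k),
      ← Real.finsetProd_rpow _ _ fun k _ => hu k]
    exact Finset.prod_congr rfl fun k _ => (supportRpow_of_pos (hpos k)).symm

variable {m : Type*} [Fintype m] {A : Matrix m m ℂ}

theorem re_trace_nonneg (hA : A.PosSemidef) : 0 ≤ A.trace.re :=
  (Complex.le_def.1 hA.trace_nonneg).1

theorem re_trace_mul_nonneg {C : Matrix m m ℂ} (hA : A.PosSemidef) (hC : C.PosSemidef) :
    0 ≤ (A * C).trace.re :=
  (Complex.le_def.1 (trace_mul_nonneg_of_posSemidef hA hC)).1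

theorem re_trace_sum_smul_mul_sum_smul {ι κ : Type*} [Fintype ι] [Fintype κ] (a : ι → ℝ) (b : κ → ℝ)
    (f : ι → Matrix m m ℂ) (g : κ → Matrix m m ℂ) :
    ((∑ i, (a i : ℂ) • f i) * ∑ k, (b k : ℂ) • g k).trace.re =
      ∑ i, ∑ k, a i * b k * (f i * g k).trace.re := by
  simp only [Finset.sum_mul_sum, Matrix.trace_sum, Complex.re_sum, smul_mul_smul_comm,
    ← Complex.ofReal_mul, Matrix.trace_smul, smul_eq_mul, Complex.re_ofReal_mul]

variable [DecidableEq m]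

theorem IsProjectionResolution.mpow_sum_smul {ι : Type*} [Fintype ι] {f : ι → Matrix m m ℂ}
    (hf : IsProjectionResolution f) (p : ι → ℝ) (r : ℝ) :
    mpow (∑ j, (p j : ℂ) • f j) r = ∑ j, (supportRpow r (p j) : ℂ) • f j :=
  hf.matFun_sum_smul p _

theorem mpow_eq_sum_eigenProj (hA : A.IsHermitian) (r : ℝ) :
    mpow A r = ∑ i, (supportRpow r (hA.eigenvalues i) : ℂ) • eigenProj hA i :=
  matFun_eq_sum_eigenProj hA _

theorem posSemidef_mpow (hA : A.IsHermitian) (r : ℝ) : (mpow A r).PosSemidef := by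
  rw [mpow_eq_sum_eigenProj hA]
  exact (isProjectionResolution_eigenProj hA).posSemidef_sum_smul fun _ => supportRpow_nonneg _ _

theorem re_trace_mpow (hA : A.PosSemidef) {r : ℝ} (hr : 0 < r) :
    (mpow A r).trace.re = ∑ i, hA.1.eigenvalues i ^ r := by
  rw [mpow_eq_sum_eigenProj hA.1, Matrix.trace_sum, Complex.re_sum]
  refine Finset.sum_congr rfl fun i _ => ?_
  rw [Matrix.trace_smul, trace_eigenProj, smul_eq_mul, mul_one, Complex.ofReal_re,
    supportRpow_eq_rpow hr (hA.eigenvalues_nonneg i)]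

theorem re_trace_mpow_le (hA : A.PosSemidef) {r : ℝ} (hr : 0 < r) :
    (mpow A r).trace.re ≤ Fintype.card m * A.trace.re ^ r := by
  have heig (i : m) : hA.1.eigenvalues i ≤ A.trace.re := by
    rw [hA.1.trace_eq_sum_eigenvalues, Complex.re_sum]
    exact Finset.single_le_sum (f := hA.1.eigenvalues) (fun j _ => hA.eigenvalues_nonneg j)
      (Finset.mem_univ i)
  rw [re_trace_mpow hA hr, ← nsmul_eq_mul]
  exact Finset.sum_le_card_nsmul _ _ _ fun i _ =>
    Real.rpow_le_rpow (hA.eigenvalues_nonneg i) (heig i) hr.le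

theorem IsProjectionResolution.tensorFam {κ δ ι : Type*} [Fintype κ] [DecidableEq κ] [Fintype δ]
    [DecidableEq δ] [Fintype ι] {f : κ → ι → Matrix δ δ ℂ}
    (hf : ∀ k, IsProjectionResolution (f k)) :
    IsProjectionResolution fun i : κ → ι => tensorFam fun k => f k (i k) where
  idem i := by
    simp only [IsIdempotentElem, tensorFam_mul_tensorFam, ((hf _).idem _).eq]
  ortho i j hij := by
    obtain ⟨k, hk⟩ := Function.ne_iff.1 hij
    ext a b
    rw [tensorFam_mul_tensorFam, _root_.tensorFam, Matrix.of_apply,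
      Finset.prod_eq_zero (Finset.mem_univ k) (by rw [(hf k).ortho hk, Matrix.zero_apply]),
      Matrix.zero_apply]
  complete := by simp only [← tensorFam_sum, (hf _).complete, tensorFam_one]
  isHermitian i := by
    simp only [Matrix.IsHermitian, conjTranspose_tensorFam, ((hf _).isHermitian _).eq]

theorem mpow_tensorFam {κ δ : Type*} [Fintype κ] [DecidableEq κ] [Fintype δ] [DecidableEq δ]
    {A : κ → Matrix δ δ ℂ} (hA : ∀ k, (A k).PosSemidef) (r : ℝ) :
    mpow (tensorFam A) r = tensorFam fun k => mpow (A k) r := by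
  have hexpand (g : ℝ → ℝ) :
      (tensorFam fun k => ∑ i, (g ((hA k).1.eigenvalues i) : ℂ) • eigenProj (hA k).1 i) =
        ∑ i : κ → δ, ((∏ k, g ((hA k).1.eigenvalues (i k)) : ℝ) : ℂ) •
          tensorFam fun k => eigenProj (hA k).1 (i k) := by
    simp only [tensorFam_sum, tensorFam_smul, Complex.ofReal_prod]
  have hspectral : tensorFam A =
      ∑ i : κ → δ, ((∏ k, (hA k).1.eigenvalues (i k) : ℝ) : ℂ) •
        tensorFam fun k => eigenProj (hA k).1 (i k) := by
    simpa only [id, sum_eigenvalues_smul_eigenProj] using hexpand id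
  rw [hspectral, (IsProjectionResolution.tensorFam fun k =>
    isProjectionResolution_eigenProj (hA k).1).mpow_sum_smul]
  simp only [mpow_eq_sum_eigenProj (hA _).1, hexpand,
    supportRpow_prod r fun k => (hA k).eigenvalues_nonneg _]

/-- Hölder's inequality for a matrix `c` of weights whose columns sum to `1`. -/
theorem sum_rpow_mul_le_card_rpow_mul {ι α : Type*} [Fintype ι] [Fintype α] {c : ι → α → ℝ}
    {v : ι → ℝ} {g : α → ℝ} (hc : ∀ i a, 0 ≤ c i a) (hv : ∀ i, 0 < v i) (hg : ∀ a, 0 ≤ g a)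
    (hrow : ∀ i, ∑ a, c i a = v i) (hcol : ∀ a, ∑ i, c i a = 1) {t : ℝ} (ht0 : 0 ≤ t)
    (ht1 : t < 1) :
    ∑ i, ∑ a, (v i)⁻¹ ^ t * g a * c i a ≤
      (Fintype.card ι : ℝ) ^ t * (∑ a, g a ^ (1 / (1 - t))) ^ (1 - t) := by
  have hs : 0 < 1 - t := sub_pos.2 ht1
  have hp : 1 ≤ 1 / (1 - t) := (one_le_div hs).2 (by linarith)
  have hholder := Real.inner_le_weight_mul_Lp_of_nonneg (Finset.univ : Finset (ι × α)) hp
    (fun q => (v q.1)⁻¹ * c q.1 q.2) (fun q => v q.1 ^ (1 - t) * g q.2)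
    (fun q => mul_nonneg (inv_pos.2 (hv _)).le (hc _ _))
    (fun q => mul_nonneg (Real.rpow_nonneg (hv _).le _) (hg _))
  have hterm (i : ι) (a : α) :
      (v i)⁻¹ * c i a * (v i ^ (1 - t) * g a) = (v i)⁻¹ ^ t * g a * c i a := by
    rw [Real.inv_rpow (hv i).le, Real.rpow_sub (hv i), Real.rpow_one]
    field_simp [(hv i).ne']
  have hpow (i : ι) (a : α) : (v i)⁻¹ * c i a * (v i ^ (1 - t) * g a) ^ (1 / (1 - t)) =
      c i a * g a ^ (1 / (1 - t)) := by
    rw [Real.mul_rpow (Real.rpow_nonneg (hv i).le _) (hg a), ← Real.rpow_mul (hv i).le,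
      mul_one_div_cancel hs.ne', Real.rpow_one]
    field_simp [(hv i).ne']
  have hweight : ∑ i, ∑ a, (v i)⁻¹ * c i a = Fintype.card ι := by
    simp [← Finset.mul_sum, hrow, inv_mul_cancel₀ (hv _).ne']
  have hnorm : ∑ i, ∑ a, c i a * g a ^ (1 / (1 - t)) = ∑ a, g a ^ (1 / (1 - t)) := by
    rw [Finset.sum_comm]
    simp [← Finset.sum_mul, hcol]
  simp only [Fintype.sum_prod_type, hterm, hpow, hweight, hnorm] at hholder
  simpa only [one_div, inv_inv, sub_sub_cancel] using hholder

theorem re_trace_mpow_universalOperator_mul {ι : Type*} [Fintype ι] {e : ι → Matrix m m ℂ}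
    (he : IsProjectionResolution e) (hpos : ∀ i, 0 < (e i).trace.re) (hA : A.IsHermitian)
    (t : ℝ) :
    (mpow (universalOperator e) t * A).trace.re =
      ∑ i, ∑ a, (e i).trace.re⁻¹ ^ t * hA.eigenvalues a * (e i * eigenProj hA a).trace.re := by
  conv_lhs => rw [← sum_eigenvalues_smul_eigenProj hA]
  rw [universalOperator, he.mpow_sum_smul, re_trace_sum_smul_mul_sum_smul]
  simp only [supportRpow_of_pos (inv_pos.2 (hpos _))]

theorem re_trace_mpow_universalOperator_mul_le {ι : Type*} [Fintype ι] {e : ι → Matrix m m ℂ}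
    (he : IsProjectionResolution e) (hpos : ∀ i, 0 < (e i).trace.re) (hA : A.PosSemidef) {t : ℝ}
    (ht0 : 0 ≤ t) (ht1 : t < 1) :
    (mpow (universalOperator e) t * A).trace.re ≤
      (Fintype.card ι : ℝ) ^ t * (mpow A (1 / (1 - t))).trace.re ^ (1 - t) := by
  have hE := isProjectionResolution_eigenProj hA.1
  rw [re_trace_mpow_universalOperator_mul he hpos hA.1,
    re_trace_mpow hA (one_div_pos.2 (sub_pos.2 ht1))]
  refine sum_rpow_mul_le_card_rpow_mul (fun i a => ?_) hpos hA.eigenvalues_nonneg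
    (fun i => ?_) (fun a => ?_) ht0 ht1
  · exact re_trace_mul_nonneg (he.posSemidef i) (hE.posSemidef a)
  · rw [← Complex.re_sum, ← Matrix.trace_sum, ← Finset.mul_sum, hE.complete, mul_one]
  · rw [← Complex.re_sum, ← Matrix.trace_sum, ← Finset.sum_mul, he.complete, one_mul,
      trace_eigenProj, Complex.one_re]

theorem mpow_mpow_one_div (hA : A.PosSemidef) {r : ℝ} (hr : 0 < r) :
    mpow (mpow A r) (1 / r) = A := by
  rw [mpow_eq_sum_eigenProj hA.1, (isProjectionResolution_eigenProj hA.1).mpow_sum_smul]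
  conv_rhs => rw [← sum_eigenvalues_smul_eigenProj hA.1]
  refine Finset.sum_congr rfl fun i _ => ?_
  have hi := hA.eigenvalues_nonneg i
  rw [supportRpow_eq_rpow hr hi, supportRpow_eq_rpow (one_div_pos.2 hr) (Real.rpow_nonneg hi _),
    ← Real.rpow_mul hi, mul_one_div_cancel hr.ne', Real.rpow_one]

end MatrixPowers

/-! ### The Rényi information -/

section RenyiInformation

variable {m : Type*} [Fintype m]

theorem isDensity_sum_smul {𝒮 : Type*} [Fintype 𝒮] {w : 𝒮 → ℝ} (hw : ∀ s, 0 ≤ w s)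
    (hw1 : ∑ s, w s = 1) {A : 𝒮 → Matrix m m ℂ} (hA : ∀ s, IsDensity (A s)) :
    IsDensity (∑ s, w s • A s) := by
  refine ⟨Matrix.posSemidef_sum _ fun s _ => (hA s).1.smul (hw s), ?_⟩
  simp only [Matrix.trace_sum, Matrix.trace_smul, (hA _).2, ← Finset.sum_smul, hw1, one_smul]

/-- The operator `∑ x, P x • ρ x ^ (1 - t)`, whose power `1 / (1 - t)` has the trace that enters
`renyiI`. -/
def powerMean {𝒳 : Type*} [Fintype 𝒳] [DecidableEq m] (P : 𝒳 → ℝ) (ρ : 𝒳 → Matrix m m ℂ)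
    (t : ℝ) : Matrix m m ℂ :=
  ∑ x, P x • mpow (ρ x) (1 - t)

variable {𝒳 : Type*} [Fintype 𝒳] {P : 𝒳 → ℝ} {t : ℝ}

theorem posSemidef_powerMean [DecidableEq m] (hP : ∀ x, 0 ≤ P x) {ρ : 𝒳 → Matrix m m ℂ}
    (hρ : ∀ x, (ρ x).IsHermitian) : (powerMean P ρ t).PosSemidef :=
  Matrix.posSemidef_sum _ fun x _ => (posSemidef_mpow (hρ x) _).smul (hP x)

theorem re_trace_powerMean_le [DecidableEq m] (hP : ∀ x, 0 ≤ P x) (hP1 : ∑ x, P x = 1)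
    (ht : t < 1) {ρ : 𝒳 → Matrix m m ℂ} (hρ : ∀ x, IsDensity (ρ x)) :
    (powerMean P ρ t).trace.re ≤ Fintype.card m := by
  have hpow (x : 𝒳) : (mpow (ρ x) (1 - t)).trace.re ≤ Fintype.card m := by
    simpa [(hρ x).2] using re_trace_mpow_le (hρ x).1 (sub_pos.2 ht)
  calc (powerMean P ρ t).trace.re = ∑ x, P x * (mpow (ρ x) (1 - t)).trace.re := by
        simp [powerMean, Matrix.trace_sum]
    _ ≤ ∑ x, P x * Fintype.card m :=
        Finset.sum_le_sum fun x _ => mul_le_mul_of_nonneg_left (hpow x) (hP x)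
    _ = Fintype.card m := by rw [← Finset.sum_mul, hP1, one_mul]

variable {d : ℕ}

theorem le_renyiI (hP : ∀ x, 0 ≤ P x) (hP1 : ∑ x, P x = 1) (ht : t ∈ Set.Ioo (0 : ℝ) 1)
    {ρ : 𝒳 → Matrix (Fin d) (Fin d) ℂ} (hρ : ∀ x, IsDensity (ρ x)) :
    -((1 - t) / t) * Real.logb 2 (d * (d : ℝ) ^ (1 / (1 - t)) + 1) ≤ renyiI P ρ t := by
  have hs : 0 < 1 - t := sub_pos.2 ht.2
  have hM := posSemidef_powerMean (t := t) hP fun x => (hρ x).1.1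
  have htrace : (mpow (powerMean P ρ t) (1 / (1 - t))).trace.re ≤ d * (d : ℝ) ^ (1 / (1 - t)) := by
    refine (re_trace_mpow_le hM (one_div_pos.2 hs)).trans ?_
    rw [Fintype.card_fin]
    gcongr
    · exact re_trace_nonneg hM
    · simpa using re_trace_powerMean_le hP hP1 ht.2 hρ
  rw [renyiI, neg_mul, neg_mul, neg_le_neg_iff]
  refine mul_le_mul_of_nonneg_left ?_ (div_nonneg hs.le ht.1.le)
  change Real.logb 2 (mpow (powerMean P ρ t) (1 / (1 - t))).trace.re ≤ _
  rcases (re_trace_nonneg (posSemidef_mpow hM.1 (1 / (1 - t)))).eq_or_lt with h | h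
  · rw [← h, Real.logb_zero]
    exact Real.logb_nonneg one_lt_two (le_add_of_nonneg_left (by positivity))
  · exact Real.logb_le_logb_of_le one_lt_two h (htrace.trans (le_add_of_nonneg_right zero_le_one))

theorem bddBelow_range_renyiI {𝒮 : Type*} [Fintype 𝒮] {ρ : 𝒳 → 𝒮 → Matrix (Fin d) (Fin d) ℂ}
    (hρ : ∀ x s, IsDensity (ρ x s)) (hP : ∀ x, 0 ≤ P x) (hP1 : ∑ x, P x = 1)
    (ht : t ∈ Set.Ioo (0 : ℝ) 1) :
    BddBelow (Set.range fun Q : ProbVec 𝒮 => renyiI P (fun x => ∑ s, Q.1 s • ρ x s) t) := by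
  refine ⟨-((1 - t) / t) * Real.logb 2 (d * (d : ℝ) ^ (1 / (1 - t)) + 1), ?_⟩
  rintro _ ⟨Q, rfl⟩
  exact le_renyiI hP hP1 ht fun x => isDensity_sum_smul Q.2.1 Q.2.2 (hρ x)

end RenyiInformation

/-! ### Tests comparing the universal operator with minimal projections -/

section ThresholdTests

variable {m : Type*} [Fintype m] [DecidableEq m] {B : StarSubalgebra ℂ (Matrix m m ℂ)}
  {ι : Type*} [Fintype ι] {f : ι → Matrix m m ℂ}

namespace IsMinimalDecomposition

theorem coeff_nonneg (hf : IsMinimalDecomposition B 1 f) {p : ι → ℝ}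
    (hp : (∑ j, (p j : ℂ) • f j).PosSemidef) (j : ι) : 0 ≤ p j := by
  have h := re_trace_mul_nonneg (hf.isMinimal j).posSemidef hp
  rw [hf.isProjectionResolution.mul_sum_smul, Matrix.trace_smul, smul_eq_mul,
    Complex.re_ofReal_mul] at h
  exact nonneg_of_mul_nonneg_left h (hf.isMinimal j).re_trace_pos

theorem coeff_le_inv_trace (hf : IsMinimalDecomposition B 1 f) {p : ι → ℝ}
    (hp : IsDensity (∑ j, (p j : ℂ) • f j)) (j : ι) : p j ≤ (f j).trace.re⁻¹ := by
  have hsum : ∑ i, p i * (f i).trace.re = 1 := by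
    simpa [Matrix.trace_sum] using congrArg Complex.re hp.2
  rw [← one_div, le_div_iff₀ (hf.isMinimal j).re_trace_pos, ← hsum]
  exact Finset.single_le_sum (f := fun i => p i * (f i).trace.re)
    (fun i _ => mul_nonneg (hf.coeff_nonneg hp.1 i) (hf.isMinimal i).re_trace_pos.le)
    (Finset.mem_univ j)

theorem posSemidef_universalOperator (hf : IsMinimalDecomposition B 1 f) :
    (universalOperator f).PosSemidef :=
  hf.isProjectionResolution.posSemidef_sum_smul fun j =>
    inv_nonneg.2 (hf.isMinimal j).re_trace_pos.le

theorem universalOperator_mem (hf : IsMinimalDecomposition B 1 f) : universalOperator f ∈ B :=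
  sum_mem fun j _ => B.smul_mem (hf.isMinimal j).mem _

theorem posSemidef_universalOperator_sub (hf : IsMinimalDecomposition B 1 f) {σ : Matrix m m ℂ}
    (hσB : σ ∈ B) (hσ : IsDensity σ) : (universalOperator f - σ).PosSemidef := by
  obtain ⟨κ, _, g, p, hg, rfl⟩ := exists_isMinimalDecomposition_diagonalizing hσB hσ.1.1
  rw [hf.universalOperator_eq hg, universalOperator, ← Finset.sum_sub_distrib]
  simp only [← sub_smul, ← Complex.ofReal_sub]
  exact hg.isProjectionResolution.posSemidef_sum_smul fun j =>
    sub_nonneg.2 (hg.coeff_le_inv_trace hσ j)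

end IsMinimalDecomposition

/-- The sum of those `f j` with `c * α j ≤ (Tr (f j))⁻¹`: a Neyman–Pearson test against
`∑ j, α j • f j`, accepting where `c` times this operator is below the normalized projections. -/
def thresholdTest (f : ι → Matrix m m ℂ) (α : ι → ℝ) (c : ℝ) : Matrix m m ℂ :=
  ∑ j, ((if c * α j ≤ (f j).trace.re⁻¹ then 1 else 0 : ℝ) : ℂ) • f j

variable {α : ι → ℝ} {c : ℝ}

theorem IsProjectionResolution.posSemidef_thresholdTest (hf : IsProjectionResolution f) :
    (thresholdTest f α c).PosSemidef :=
  hf.posSemidef_sum_smul fun _ => ite_nonneg zero_le_one le_rfl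

theorem IsProjectionResolution.one_sub_thresholdTest (hf : IsProjectionResolution f) :
    1 - thresholdTest f α c =
      ∑ j, ((if c * α j ≤ (f j).trace.re⁻¹ then 0 else 1 : ℝ) : ℂ) • f j := by
  rw [← hf.complete, thresholdTest, ← Finset.sum_sub_distrib]
  refine Finset.sum_congr rfl fun j _ => ?_
  split_ifs <;> simp

theorem IsProjectionResolution.posSemidef_one_sub_thresholdTest (hf : IsProjectionResolution f) :
    (1 - thresholdTest f α c).PosSemidef := by
  rw [hf.one_sub_thresholdTest]
  exact hf.posSemidef_sum_smul fun _ => ite_nonneg le_rfl zero_le_one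

theorem IsMinimalDecomposition.re_trace_thresholdTest_mul_le (hf : IsMinimalDecomposition B 1 f)
    (hc : 0 < c) :
    (thresholdTest f α c * ∑ j, (α j : ℂ) • f j).trace.re ≤ Fintype.card ι / c := by
  rw [thresholdTest, hf.isProjectionResolution.sum_smul_mul_sum_smul, Matrix.trace_sum,
    Complex.re_sum, div_eq_mul_inv, ← nsmul_eq_mul]
  refine Finset.sum_le_card_nsmul _ _ _ fun j _ => ?_
  have htrace := (hf.isMinimal j).re_trace_pos
  rw [← Complex.ofReal_mul, Matrix.trace_smul, smul_eq_mul, Complex.re_ofReal_mul]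
  split_ifs with h
  · rw [← one_div, le_div_iff₀ hc, one_mul]
    calc α j * (f j).trace.re * c = c * α j * (f j).trace.re := by ring
      _ ≤ (f j).trace.re⁻¹ * (f j).trace.re := by gcongr
      _ = 1 := inv_mul_cancel₀ htrace.ne'
  · simpa using hc.le

theorem le_rpow_mul_rpow_one_sub {p u t : ℝ} (hp : 0 ≤ p) (hpu : p ≤ u) (ht0 : 0 ≤ t)
    (ht1 : t ≤ 1) : p ≤ u ^ t * p ^ (1 - t) :=
  calc p = p ^ t * p ^ (1 - t) := by
        rw [← Real.rpow_add_of_nonneg hp ht0 (sub_nonneg.2 ht1), add_sub_cancel, Real.rpow_one]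
    _ ≤ u ^ t * p ^ (1 - t) := by gcongr

/-- Two minimal projections which are not orthogonal have the same trace `v`. If the test rejects
`f k`, this gives `p j ≤ v⁻¹ < c * α k`, hence `p j ≤ (c * α k) ^ t * p j ^ (1 - t)`. -/
theorem IsMinimalDecomposition.re_trace_one_sub_thresholdTest_mul_le
    (hf : IsMinimalDecomposition B 1 f) (hα : ∀ j, 0 ≤ α j) (hc : 0 ≤ c) {A : Matrix m m ℂ}
    (hAB : A ∈ B) (hA : IsDensity A) {t : ℝ} (ht : t ∈ Set.Ioo (0 : ℝ) 1) :
    ((1 - thresholdTest f α c) * A).trace.re ≤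
      c ^ t * (mpow (∑ j, (α j : ℂ) • f j) t * mpow A (1 - t)).trace.re := by
  obtain ⟨κ, _, g, p, hg, rfl⟩ := exists_isMinimalDecomposition_diagonalizing hAB hA.1.1
  have hp := hg.coeff_nonneg hA.1
  rw [hf.isProjectionResolution.one_sub_thresholdTest, hf.isProjectionResolution.mpow_sum_smul,
    hg.isProjectionResolution.mpow_sum_smul, re_trace_sum_smul_mul_sum_smul,
    re_trace_sum_smul_mul_sum_smul, Finset.mul_sum]
  refine Finset.sum_le_sum fun k _ => ?_
  rw [Finset.mul_sum]
  refine Finset.sum_le_sum fun j _ => ?_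
  rw [supportRpow_eq_rpow ht.1 (hα k), supportRpow_eq_rpow (sub_pos.2 ht.2) (hp j), ← mul_assoc]
  by_cases hfg : f k * g j = 0
  · simp [hfg]
  have htrace := (hf.isMinimal k).trace_eq_of_mul_ne_zero (hg.isMinimal j) hfg
  refine mul_le_mul_of_nonneg_right ?_
    (re_trace_mul_nonneg (hf.isMinimal k).posSemidef (hg.isMinimal j).posSemidef)
  split_ifs with h
  · rw [zero_mul]
    exact mul_nonneg (Real.rpow_nonneg hc _)
      (mul_nonneg (Real.rpow_nonneg (hα k) _) (Real.rpow_nonneg (hp j) _))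
  · rw [one_mul, ← mul_assoc, ← Real.mul_rpow hc (hα k)]
    refine le_rpow_mul_rpow_one_sub (hp j) ?_ ht.1.le ht.2.le
    exact (hg.coeff_le_inv_trace hA j).trans (htrace ▸ (not_le.1 h).le)

theorem IsMinimalDecomposition.exists_test {B' : StarSubalgebra ℂ (Matrix m m ℂ)} (hBB' : B ≤ B')
    (hf : IsMinimalDecomposition B 1 f) (hc : 0 < c) {K : ℕ}
    (hK : ∀ (κ : Type) [Fintype κ] (g : κ → Matrix m m ℂ), IsMinimalDecomposition B' 1 g →
      Fintype.card κ ≤ K) :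
    ∃ T : Matrix m m ℂ, T.PosSemidef ∧ (1 - T).PosSemidef ∧
      (T * universalOperator f).trace.re ≤ 1 / c ∧
      ∀ A ∈ B', IsDensity A → ∀ t ∈ Set.Ioo (0 : ℝ) 1, ((1 - T) * A).trace.re ≤
        (c * K) ^ t * (mpow (universalOperator f) t * mpow A (1 - t)).trace.re := by
  obtain ⟨κ, _, g, α, hg, hτ⟩ := exists_isMinimalDecomposition_diagonalizing
    (hBB' hf.universalOperator_mem) hf.posSemidef_universalOperator.1
  have hα := hg.coeff_nonneg (hτ ▸ hf.posSemidef_universalOperator)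
  have hres := hg.isProjectionResolution
  refine ⟨thresholdTest g α (c * Fintype.card κ), hres.posSemidef_thresholdTest,
    hres.posSemidef_one_sub_thresholdTest, ?_, fun A hAB hA t ht => ?_⟩
  · rw [hτ]
    rcases isEmpty_or_nonempty κ with hκ | hκ
    · simpa using hc.le
    · have hcard : (0 : ℝ) < Fintype.card κ := Nat.cast_pos.2 Fintype.card_pos
      refine (hg.re_trace_thresholdTest_mul_le (mul_pos hc hcard)).trans_eq ?_
      field_simp
  · rw [hτ]
    refine (hg.re_trace_one_sub_thresholdTest_mul_le hα (by positivity) hAB hA ht).trans ?_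
    gcongr
    · rw [← hτ]
      exact re_trace_mul_nonneg (posSemidef_mpow hf.posSemidef_universalOperator.1 _)
        (posSemidef_mpow hA.1.1 _)
    · exact ht.1.le
    · exact hK κ g hg

end ThresholdTests

/-! ### Classical-quantum states -/

section ClassicalQuantumStates

open scoped Matrix

variable {X m : Type*} [DecidableEq X]

theorem conjTranspose_cqState (w : X → ℝ) (A : X → Matrix m m ℂ) :
    (cqState w A)ᴴ = cqState w fun x => (A x)ᴴ := by
  ext ⟨x, i⟩ ⟨y, j⟩
  by_cases h : x = y
  · subst h
    simp [cqState]
  · simp [cqState, h, Ne.symm h]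

theorem one_sub_cqState_one [DecidableEq m] (A : X → Matrix m m ℂ) :
    1 - cqState (fun _ => 1) A = cqState (fun _ => 1) fun x => 1 - A x := by
  ext ⟨x, i⟩ ⟨y, j⟩
  by_cases h : x = y
  · subst h
    simp [cqState, Matrix.one_apply]
  · simp [cqState, Matrix.one_apply, h]

variable [Fintype X] [Fintype m]

theorem cqState_mul_cqState (w w' : X → ℝ) (A A' : X → Matrix m m ℂ) :
    cqState w A * cqState w' A' = cqState (fun x => w x * w' x) fun x => A x * A' x := by
  ext ⟨x, i⟩ ⟨y, j⟩
  simp only [cqState, Matrix.mul_apply, Matrix.of_apply, Fintype.sum_prod_type]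
  rw [Fintype.sum_eq_single x fun z hz => by simp [hz.symm]]
  simp only [↓reduceIte]
  split_ifs
  · simp only [Finset.mul_sum, Complex.ofReal_mul]
    exact Finset.sum_congr rfl fun k _ => by ring
  · simp

theorem trace_cqState (w : X → ℝ) (A : X → Matrix m m ℂ) :
    (cqState w A).trace = ∑ x, (w x : ℂ) * (A x).trace := by
  simp [cqState, Matrix.trace, Matrix.diag, Fintype.sum_prod_type, Finset.mul_sum]

theorem re_trace_cqState_one_mul_cqState (T A : X → Matrix m m ℂ) (w : X → ℝ) :
    (cqState (fun _ => 1) T * cqState w A).trace.re = ∑ x, w x * (T x * A x).trace.re := by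
  simp [cqState_mul_cqState, trace_cqState]

theorem posSemidef_cqState_one {X m : Type*} [Finite X] [DecidableEq X] [Finite m]
    {A : X → Matrix m m ℂ} (hA : ∀ x, (A x).PosSemidef) :
    (cqState (fun _ => 1) A).PosSemidef := by
  cases nonempty_fintype X
  cases nonempty_fintype m
  choose D hD using fun x => exists_eq_conjTranspose_mul_self (hA x)
  have hfactor : cqState (fun _ => 1) A = (cqState (fun _ => 1) D)ᴴ * cqState (fun _ => 1) D := by
    simp only [conjTranspose_cqState, cqState_mul_cqState, mul_one, ← hD]
  rw [hfactor]
  exact Matrix.posSemidef_conjTranspose_mul_self _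

end ClassicalQuantumStates

/-! ### Error bounds -/

section TestFamily

variable {κ 𝒳 : Type*} [Fintype κ] [DecidableEq κ] [Fintype 𝒳] {P : 𝒳 → ℝ}

theorem sum_prod_eq_one (hP1 : ∑ x, P x = 1) : ∑ x : κ → 𝒳, ∏ k, P (x k) = 1 := by
  rw [← Fintype.piFinset_univ, Finset.sum_prod_piFinset, hP1, Finset.prod_const_one]

theorem re_trace_mul_tensorFam_sum_smul {δ : Type*} [Fintype δ]
    (A : Matrix (κ → δ) (κ → δ) ℂ) (w : 𝒳 → ℝ) (X : κ → 𝒳 → Matrix δ δ ℂ) :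
    (A * tensorFam fun k => ∑ a, w a • X k a).trace.re =
      ∑ g : κ → 𝒳, (∏ k, w (g k)) * (A * tensorFam fun k => X k (g k)).trace.re := by
  simp only [← Complex.coe_smul, tensorFam_sum, tensorFam_smul, Finset.mul_sum, Matrix.trace_sum,
    Complex.re_sum, Matrix.mul_smul, Matrix.trace_smul, smul_eq_mul, ← Complex.ofReal_prod,
    Complex.re_ofReal_mul]

theorem re_trace_tensorFam_const {δ : Type*} [Fintype δ] {A : Matrix δ δ ℂ} (hA : A.PosSemidef) :
    (tensorFam fun _ : κ => A).trace.re = A.trace.re ^ Fintype.card κ := by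
  have hreal : A.trace = A.trace.re :=
    Complex.eq_re_of_ofReal_le (r := 0) (by simpa using hA.trace_nonneg)
  rw [trace_tensorFam, Finset.prod_const, Finset.card_univ, hreal, ← Complex.ofReal_pow,
    Complex.ofReal_re, Complex.ofReal_re]

theorem pow_rpow_one_sub_le {Z t : ℝ} (hZ : 0 ≤ Z) (ht : t ∈ Set.Ioo (0 : ℝ) 1) (n : ℕ) :
    (Z ^ n) ^ (1 - t) ≤ (2 : ℝ) ^ (-(n * t * (-((1 - t) / t) * Real.logb 2 Z))) := by
  rcases hZ.eq_or_lt with rfl | hZ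
  · simpa using Real.rpow_le_one (pow_nonneg le_rfl n) (pow_le_one₀ le_rfl zero_le_one)
      (sub_pos.2 ht.2).le
  · have hexp : -(n * t * (-((1 - t) / t) * Real.logb 2 Z)) = Real.logb 2 Z * (n * (1 - t)) := by
      field_simp [ht.1.ne']
    rw [hexp, Real.rpow_mul zero_le_two, Real.rpow_logb zero_lt_two (by norm_num) hZ,
      Real.rpow_mul hZ.le, Real.rpow_natCast]

variable {d : ℕ} {t : ℝ}

theorem sum_prod_mul_re_trace_mpow_mul_le {ι : Type*} [Fintype ι]
    {e : ι → Matrix (κ → Fin d) (κ → Fin d) ℂ} (he : IsProjectionResolution e)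
    (hpos : ∀ i, 0 < (e i).trace.re) (hP : ∀ x, 0 ≤ P x) {r : 𝒳 → Matrix (Fin d) (Fin d) ℂ}
    (hr : ∀ x, (r x).PosSemidef) (ht : t ∈ Set.Ioo (0 : ℝ) 1) :
    ∑ x : κ → 𝒳, (∏ k, P (x k)) *
        (mpow (universalOperator e) t * mpow (tensorFam fun k => r (x k)) (1 - t)).trace.re ≤
      (Fintype.card ι : ℝ) ^ t * (2 : ℝ) ^ (-(Fintype.card κ * t * renyiI P r t)) := by
  have hM := posSemidef_powerMean (t := t) hP fun x => (hr x).1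
  simp only [mpow_tensorFam fun _ => hr _,
    ← re_trace_mul_tensorFam_sum_smul _ P fun _ x => mpow (r x) (1 - t)]
  refine (re_trace_mpow_universalOperator_mul_le he hpos
    (posSemidef_tensorFam fun _ : κ => hM) ht.1.le ht.2).trans ?_
  rw [mpow_tensorFam fun _ => hM, re_trace_tensorFam_const (posSemidef_mpow hM.1 _)]
  exact mul_le_mul_of_nonneg_left
    (pow_rpow_one_sub_le (re_trace_nonneg (posSemidef_mpow hM.1 _)) ht _) (by positivity)

theorem sum_prod_mul_le_of_forall_le {ι : Type*} [Fintype ι]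
    {e : ι → Matrix (κ → Fin d) (κ → Fin d) ℂ} (he : IsProjectionResolution e)
    (hpos : ∀ i, 0 < (e i).trace.re) (hP : ∀ x, 0 ≤ P x) {r : 𝒳 → Matrix (Fin d) (Fin d) ℂ}
    (hr : ∀ x, (r x).PosSemidef) (ht : t ∈ Set.Ioo (0 : ℝ) 1) {b : ℝ} (hb : 0 ≤ b)
    {u : (κ → 𝒳) → ℝ} (hu : ∀ x, u x ≤ b ^ t *
      (mpow (universalOperator e) t * mpow (tensorFam fun k => r (x k)) (1 - t)).trace.re) :
    ∑ x : κ → 𝒳, (∏ k, P (x k)) * u x ≤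
      (b * Fintype.card ι) ^ t * (2 : ℝ) ^ (-(Fintype.card κ * t * renyiI P r t)) :=
  calc _ ≤ ∑ x : κ → 𝒳, (∏ k, P (x k)) * (b ^ t * (mpow (universalOperator e) t *
          mpow (tensorFam fun k => r (x k)) (1 - t)).trace.re) :=
        Finset.sum_le_sum fun x _ => mul_le_mul_of_nonneg_left (hu x)
          (Finset.prod_nonneg fun k _ => hP _)
    _ = b ^ t * ∑ x : κ → 𝒳, (∏ k, P (x k)) * (mpow (universalOperator e) t *
          mpow (tensorFam fun k => r (x k)) (1 - t)).trace.re := by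
        simp only [Finset.mul_sum, mul_left_comm]
    _ ≤ b ^ t * ((Fintype.card ι : ℝ) ^ t *
          (2 : ℝ) ^ (-(Fintype.card κ * t * renyiI P r t))) := by
        grw [sum_prod_mul_re_trace_mpow_mul_le he hpos hP hr ht]
    _ = _ := by rw [← mul_assoc, ← Real.mul_rpow hb (Nat.cast_nonneg _)]

theorem exists_test_family [DecidableEq 𝒳] (hd : 0 < d) {c C : ℝ} (hc : 0 < c) (hC0 : 0 ≤ C)
    (hC : ∀ x : κ → 𝒳, c * ((Fintype.card (LowerIndex d)).multichoose (Fintype.card κ) *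
      ∏ a, (Fintype.card (LowerIndex d)).multichoose (occurrences x a) : ℕ) ≤ C) :
    ∃ T : (κ → 𝒳) → Matrix (κ → Fin d) (κ → Fin d) ℂ,
      (∀ x, (T x).PosSemidef) ∧ (∀ x, (1 - T x).PosSemidef) ∧
      (∀ x, ∀ σ ∈ colorAlgebra (Fin d) fun _ : κ => (), IsDensity σ →
        (T x * σ).trace.re ≤ 1 / c) ∧
      ∀ P : 𝒳 → ℝ, (∀ x, 0 ≤ P x) → ∀ r : 𝒳 → Matrix (Fin d) (Fin d) ℂ, (∀ x, IsDensity (r x)) →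
        ∀ t ∈ Set.Ioo (0 : ℝ) 1,
          ∑ x : κ → 𝒳, (∏ k, P (x k)) * ((1 - T x) * tensorFam fun k => r (x k)).trace.re ≤
            C ^ t * (2 : ℝ) ^ (-(Fintype.card κ * t * renyiI P r t)) := by
  obtain ⟨ι, _, e, -, he, -⟩ := exists_isMinimalDecomposition_diagonalizing
    (one_mem (colorAlgebra (Fin d) fun _ : κ => ())) Matrix.isHermitian_one
  have hι : Fintype.card ι ≤ (Fintype.card (LowerIndex d)).multichoose (Fintype.card κ) := by
    simpa [occurrences] using he.card_le
  choose T hT hT' hτ hA using fun x : κ → 𝒳 => he.exists_test (colorAlgebra_const_le x) hc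
    fun _ _ _ hg => hg.card_le
  refine ⟨T, hT, hT', fun x σ hσ hσd => ?_, fun P hP r hr t ht => ?_⟩
  · have hdom := re_trace_mul_nonneg (hT x) (he.posSemidef_universalOperator_sub hσ hσd)
    rw [mul_sub, Matrix.trace_sub, Complex.sub_re, sub_nonneg] at hdom
    exact hdom.trans (hτ x)
  · set N := (Fintype.card (LowerIndex d)).multichoose (Fintype.card κ)
    have hN : 0 < (N : ℝ) := by
      have hcard : 0 < Fintype.card (LowerIndex d) := by rw [card_lowerIndex]; omega
      exact_mod_cast (Nat.multichoose_eq _ _).symm ▸ Nat.choose_pos (by omega)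
    have htest (x : κ → 𝒳) : ((1 - T x) * tensorFam fun k => r (x k)).trace.re ≤
        (C / N) ^ t * (mpow (universalOperator e) t *
          mpow (tensorFam fun k => r (x k)) (1 - t)).trace.re := by
      refine (hA x _ (tensorFam_mem_colorAlgebra x r)
        (isDensity_tensorFam fun k => hr (x k)) t ht).trans (mul_le_mul_of_nonneg_right ?_ ?_)
      · refine Real.rpow_le_rpow (by positivity) ?_ ht.1.le
        rw [le_div_iff₀ hN, mul_assoc, mul_comm (Nat.cast _)]
        exact_mod_cast hC x
      · exact re_trace_mul_nonneg (posSemidef_mpow he.posSemidef_universalOperator.1 _)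
          (posSemidef_mpow (posSemidef_tensorFam fun k => (hr (x k)).1).1 _)
    grw [sum_prod_mul_le_of_forall_le he.isProjectionResolution
      (fun i => (he.isMinimal i).re_trace_pos) hP (fun x => (hr x).1) ht (by positivity) htest,
      hι, div_mul_cancel₀ _ hN.ne']
    exact ht.1.le

end TestFamily

section PermutationAveragedTests

variable {κ 𝒳 𝒮 δ : Type*} [Fintype κ] [DecidableEq κ] [Fintype δ] [DecidableEq δ]

theorem permAverage_tensorFam (ρ : 𝒳 → 𝒮 → Matrix δ δ ℂ) (s : κ → 𝒮) (x : κ → 𝒳) :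
    permAverage (fun y => tensorFam fun k => ρ (y k) (s k)) x =
      (Fintype.card (Equiv.Perm κ) : ℂ)⁻¹ •
        ∑ π : Equiv.Perm κ, tensorFam fun k => ρ (x k) (s (π k)) := by
  simp only [permAverage, permuteFactors_tensorFam, Function.comp_apply, Equiv.apply_symm_apply]
  congr 1
  exact Equiv.sum_comp (Equiv.inv (Equiv.Perm κ)) fun π => tensorFam fun k => ρ (x k) (s (π k))

variable [Fintype 𝒳] [DecidableEq 𝒳] {P : 𝒳 → ℝ} {T : (κ → 𝒳) → Matrix (κ → δ) (κ → δ) ℂ}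

theorem re_trace_cqState_permAverage_mul (T A : (κ → 𝒳) → Matrix (κ → δ) (κ → δ) ℂ) (P : 𝒳 → ℝ) :
    (cqState (fun _ => 1) (permAverage T) * cqState (fun x => ∏ k, P (x k)) A).trace.re =
      ∑ x, (∏ k, P (x k)) * (T x * permAverage A x).trace.re := by
  have hswap := congrArg Complex.re (sum_trace_permAverage_mul
    (w := fun x => ((∏ k, P (x k) : ℝ) : ℂ))
    (fun π x => congrArg _ (Equiv.prod_comp π fun k => P (x k))) T A)
  simpa only [re_trace_cqState_one_mul_cqState, Complex.re_sum, Complex.re_ofReal_mul] using hswap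

theorem re_trace_cqState_permAverage_mul_const_le {b : ℝ}
    (hb : ∀ x, ∀ σ ∈ colorAlgebra δ fun _ : κ => (), IsDensity σ → (T x * σ).trace.re ≤ b)
    (hP : ∀ x, 0 ≤ P x) (hP1 : ∑ x, P x = 1) {σ : Matrix (κ → δ) (κ → δ) ℂ} (hσ : IsDensity σ) :
    (cqState (fun _ => 1) (permAverage T) *
      cqState (fun x : κ → 𝒳 => ∏ k, P (x k)) fun _ => σ).trace.re ≤ b := by
  rw [re_trace_cqState_permAverage_mul]
  calc _ ≤ ∑ x : κ → 𝒳, (∏ k, P (x k)) * b :=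
        Finset.sum_le_sum fun x _ => mul_le_mul_of_nonneg_left
          (hb x _ (permAverage_const_mem_colorAlgebra σ x) (isDensity_permAverage_const hσ x))
          (Finset.prod_nonneg fun k _ => hP _)
    _ = b := by rw [← Finset.sum_mul, sum_prod_eq_one hP1, one_mul]

/-- Permutation invariance replaces `s` by its average over its type class, which the i.i.d.
mixture with weights `empirical s` dominates up to a polynomial factor. -/
theorem re_trace_one_sub_cqState_permAverage_mul_le [Fintype 𝒮] [DecidableEq 𝒮] [Nonempty 𝒮]
    {ρ : 𝒳 → 𝒮 → Matrix δ δ ℂ} (hρ : ∀ x s, (ρ x s).PosSemidef)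
    (hT : ∀ x, (1 - T x).PosSemidef) (hP : ∀ x, 0 ≤ P x) (s : κ → 𝒮) :
    ((1 - cqState (fun _ => 1) (permAverage T)) *
      cqState (fun x : κ → 𝒳 => ∏ k, P (x k)) fun x => tensorFam fun k => ρ (x k) (s k)).trace.re ≤
    ((Fintype.card κ : ℝ) + 1) ^ (Fintype.card 𝒮 - 1) *
      ∑ x : κ → 𝒳, (∏ k, P (x k)) * ((1 - T x) *
        tensorFam fun k => ∑ a, empirical s a • ρ (x k) a).trace.re := by
  simp only [one_sub_cqState_one, one_sub_permAverage]
  rw [re_trace_cqState_permAverage_mul (fun x => 1 - T x), Finset.mul_sum]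
  refine Finset.sum_le_sum fun x _ => ?_
  rw [mul_left_comm]
  refine mul_le_mul_of_nonneg_left ?_ (Finset.prod_nonneg fun k _ => hP _)
  have htypes := sum_comp_perm_le s
    (fun s' => ((1 - T x) * tensorFam fun k => ρ (x k) (s' k)).trace.re)
    fun s' => re_trace_mul_nonneg (hT x) (posSemidef_tensorFam fun k => hρ _ _)
  rw [permAverage_tensorFam, re_trace_mul_tensorFam_sum_smul, Matrix.mul_smul, Matrix.trace_smul,
    Matrix.mul_sum, Matrix.trace_sum, ← Complex.ofReal_natCast, ← Complex.ofReal_inv, smul_eq_mul,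
    Complex.re_ofReal_mul, Complex.re_sum, Fintype.card_perm,
    inv_mul_le_iff₀ (Nat.cast_pos.2 (Nat.factorial_pos _)), ← mul_assoc]
  exact htypes

end PermutationAveragedTests

/-! ### Universal tests -/

theorem rpow_typeI_exponent {y : ℝ} (hy : 0 < y) {S : ℕ} (hS : 0 < S) (X d : ℕ) (t : ℝ) :
    y ^ ((S : ℝ) - 1 + t * X * (((d + 1 : ℕ) : ℝ) - 1) * (d + 1 : ℕ) / 2 +
        (((d + 1 : ℕ) : ℝ) - 1) * X * t) =
      y ^ (S - 1) * (y ^ (X * (d + (d + 1).choose 2))) ^ t := by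
  rw [← Real.rpow_natCast, ← Real.rpow_natCast, ← Real.rpow_mul hy.le, ← Real.rpow_add hy]
  congr 1
  push_cast [Nat.cast_choose_two, Nat.cast_sub hS]
  ring

theorem rpow_mul_rpow_neg_le {v t I J : ℝ} (hv : 0 ≤ v) (ht : 0 ≤ t) (hIJ : I ≤ J) (n : ℕ) (R : ℝ) :
    ((2 : ℝ) ^ (n * R) * v) ^ t * (2 : ℝ) ^ (-(n * t * J)) ≤ v ^ t * (2 : ℝ) ^ (n * t * (R - I)) :=
  calc _ = v ^ t * (2 : ℝ) ^ (n * t * (R - J)) := by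
        rw [Real.mul_rpow (by positivity) hv, ← Real.rpow_mul zero_le_two, mul_right_comm,
          ← Real.rpow_add zero_lt_two, mul_comm]
        ring_nf
    _ ≤ _ := by gcongr; exact one_le_two

section DegenerateCases

variable {𝒳 : Type*} [Fintype 𝒳] {d : ℕ}

theorem nonempty_of_sum_eq_one {P : 𝒳 → ℝ} (hP1 : ∑ x, P x = 1) : Nonempty 𝒳 := by
  by_contra hempty
  simp [not_nonempty_iff.1 hempty] at hP1

theorem renyiI_of_subsingleton [Subsingleton 𝒳] {P : 𝒳 → ℝ} (hP1 : ∑ x, P x = 1)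
    {r : 𝒳 → Matrix (Fin d) (Fin d) ℂ} (hr : ∀ x, IsDensity (r x)) {t : ℝ} (ht : t < 1) :
    renyiI P r t = 0 := by
  obtain ⟨x₀⟩ := nonempty_of_sum_eq_one hP1
  rw [Fintype.sum_subsingleton _ x₀] at hP1
  rw [renyiI, Fintype.sum_subsingleton _ x₀, hP1, one_smul,
    mpow_mpow_one_div (hr x₀).1 (sub_pos.2 ht), (hr x₀).2, Complex.one_re, Real.logb_one, mul_zero]

theorem pos_of_isDensity {A : Matrix (Fin d) (Fin d) ℂ} (hA : IsDensity A) : 0 < d := by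
  rcases d.eq_zero_or_pos with rfl | hd
  · simpa [Matrix.trace] using hA.2
  · exact hd

theorem re_trace_cqState_prod {κ B : Type*} [Fintype κ] [DecidableEq κ] [DecidableEq 𝒳] [Fintype B]
    {P : 𝒳 → ℝ} (hP1 : ∑ x, P x = 1) {A : (κ → 𝒳) → Matrix B B ℂ} (hA : ∀ x, IsDensity (A x)) :
    (cqState (fun x : κ → 𝒳 => ∏ k, P (x k)) A).trace.re = 1 := by
  simp only [trace_cqState, (hA _).2, mul_one, ← Complex.ofReal_sum, sum_prod_eq_one hP1,
    Complex.ofReal_re]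

end DegenerateCases

section UniversalTests

variable {𝒳 𝒮 : Type*} [Fintype 𝒳] [DecidableEq 𝒳] [Fintype 𝒮]

/-- `T` is a test on `n` copies, with type I error exponent governed by the rate `R` for every
state sequence and type II error at most `2 ^ (-n * R)` up to a polynomial factor, uniformly in
the input distribution `P`. -/
structure IsUniversalTest {d : ℕ} (ρ : 𝒳 → 𝒮 → Matrix (Fin d) (Fin d) ℂ) (n : ℕ) (R : ℝ)
    (T : Matrix ((Fin n → 𝒳) × (Fin n → Fin d)) ((Fin n → 𝒳) × (Fin n → Fin d)) ℂ) : Prop where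
  posSemidef : T.PosSemidef
  posSemidef_one_sub : (1 - T).PosSemidef
  typeI_le : ∀ {P : 𝒳 → ℝ}, (∀ x, 0 ≤ P x) → ∑ x, P x = 1 → ∀ {t : ℝ}, t ∈ Set.Ioo (0 : ℝ) 1 →
    ∀ s : Fin n → 𝒮,
    ((1 - T) * cqState (fun x : Fin n → 𝒳 => ∏ k, P (x k))
      fun x => tensorFam fun k => ρ (x k) (s k)).trace.re ≤
    ((n : ℝ) + 1) ^ ((Fintype.card 𝒮 : ℝ) - 1 + t * Fintype.card 𝒳 * ((d : ℝ) - 1) * d / 2 +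
        ((d : ℝ) - 1) * Fintype.card 𝒳 * t) *
      (2 : ℝ) ^ (n * t * (R - ⨅ Q : ProbVec 𝒮, renyiI P (fun x => ∑ a, Q.1 a • ρ x a) t))
  typeII_le : ∀ {P : 𝒳 → ℝ}, (∀ x, 0 ≤ P x) → ∑ x, P x = 1 →
    ∀ {σ : Matrix (Fin n → Fin d) (Fin n → Fin d) ℂ}, IsDensity σ →
    (T * cqState (fun x : Fin n → 𝒳 => ∏ k, P (x k)) fun _ => σ).trace.re ≤
      (n : ℝ) ^ ((d : ℝ) * ((d : ℝ) - 1) / 2) * numPartLe n d * (2 : ℝ) ^ (-(n : ℝ) * R)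

variable {n d : ℕ}

theorem exists_isUniversalTest_of_two_le_card [Nonempty 𝒮]
    {ρ : 𝒳 → 𝒮 → Matrix (Fin (d + 1)) (Fin (d + 1)) ℂ} (hρ : ∀ x s, IsDensity (ρ x s))
    (h𝒳 : 2 ≤ Fintype.card 𝒳) (hn : 1 ≤ n) (R : ℝ) : ∃ T, IsUniversalTest ρ n R T := by
  classical
  have : Nonempty (Fin n) := ⟨⟨0, hn⟩⟩
  set D : ℝ := (n : ℝ) ^ (d + 1).choose 2 * numPartLe n (d + 1) with hD
  set V : ℝ := ((n : ℝ) + 1) ^ (Fintype.card 𝒳 * (d + (d + 1).choose 2)) with hV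
  have hDpos : 0 < D := mul_pos (pow_pos (Nat.cast_pos.2 hn) _)
    (Nat.cast_pos.2 (numPartLe_pos (Nat.le_add_left 1 d) n))
  obtain ⟨T, hT, hT', hII, hI⟩ := exists_test_family (κ := Fin n) (𝒳 := 𝒳) (d := d + 1)
    (c := 2 ^ (n * R) / D) (C := 2 ^ (n * R) * V) d.succ_pos (by positivity) (by positivity)
    fun x => by
      have hcount := multichoose_card_mul_prod_multichoose_le h𝒳 d x
      rw [Fintype.card_fin] at hcount ⊢
      rw [div_mul_eq_mul_div, div_le_iff₀ hDpos, mul_assoc, mul_comm V, hD, hV]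
      gcongr
      exact_mod_cast hcount
  refine ⟨cqState (fun _ => 1) (permAverage T), posSemidef_cqState_one (posSemidef_permAverage hT),
    ?_, fun hP hP1 t ht s => ?_, fun hP hP1 σ hσ => ?_⟩
  · simp only [one_sub_cqState_one, one_sub_permAverage]
    exact posSemidef_cqState_one (posSemidef_permAverage hT')
  · have hinf := ciInf_le (bddBelow_range_renyiI hρ hP hP1 ht)
      ⟨empirical s, empirical_nonneg s, sum_empirical s⟩
    have hiid := hI _ hP _ (fun x => isDensity_sum_smul (empirical_nonneg s) (sum_empirical s)
      (hρ x)) t ht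
    rw [Fintype.card_fin] at hiid
    grw [re_trace_one_sub_cqState_permAverage_mul_le (fun x s => (hρ x s).1) hT' hP s, hiid,
      rpow_mul_rpow_neg_le (by positivity) ht.1.le hinf n R, Fintype.card_fin,
      rpow_typeI_exponent (by positivity) Fintype.card_pos, ← mul_assoc]
  · refine (re_trace_cqState_permAverage_mul_const_le hII hP hP1 hσ).trans_eq ?_
    rw [one_div_div, neg_mul, Real.rpow_neg zero_le_two, ← div_eq_mul_inv, hD,
      ← Nat.cast_choose_two, Real.rpow_natCast]

theorem isUniversalTest_zero [Nonempty 𝒮] [Subsingleton 𝒳]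
    {ρ : 𝒳 → 𝒮 → Matrix (Fin d) (Fin d) ℂ} (hρ : ∀ x s, IsDensity (ρ x s)) {R : ℝ} (hR : 0 ≤ R) :
    IsUniversalTest ρ n R 0 where
  posSemidef := Matrix.PosSemidef.zero
  posSemidef_one_sub := by simpa only [sub_zero] using Matrix.PosSemidef.one
  typeI_le {P} _ hP1 {t} ht s := by
    obtain ⟨x₀⟩ := nonempty_of_sum_eq_one hP1
    have hd : 1 ≤ d := pos_of_isDensity (hρ x₀ (Classical.arbitrary 𝒮))
    have hI (Q : ProbVec 𝒮) : renyiI P (fun x => ∑ a, Q.1 a • ρ x a) t = 0 :=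
      renyiI_of_subsingleton hP1 (fun x => isDensity_sum_smul Q.2.1 Q.2.2 (hρ x)) ht.2
    simp only [sub_zero, one_mul, hI, Real.iInf_const_zero,
      re_trace_cqState_prod hP1 fun x => isDensity_tensorFam fun k => hρ (x k) (s k)]
    obtain ⟨e, rfl⟩ := Nat.exists_eq_add_of_le' hd
    rw [rpow_typeI_exponent (by positivity) Fintype.card_pos]
    have hn : (1 : ℝ) ≤ n + 1 := by simp
    have ht0 := ht.1.le
    exact one_le_mul_of_one_le_of_one_le (one_le_mul_of_one_le_of_one_le (one_le_pow₀ hn)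
      (Real.one_le_rpow (one_le_pow₀ hn) ht0)) (Real.one_le_rpow one_le_two (by positivity))
  typeII_le {_} _ _ {_} _ := by
    rw [zero_mul, Matrix.trace_zero, Complex.zero_re]
    positivity

end UniversalTests

/-- For finite `𝒮`, every `n ≥ 1` and `R̂ > 0` there is a universal test
`T_n` with `0 ⪯ T_n ⪯ I` satisfying, for every probability distribution `P` on `𝒳` and every
`t ∈ (0,1)`, the two operational bounds (i) and (ii). -/
theorem statement1 {𝒳 𝒮 : Type*} [Fintype 𝒳] [DecidableEq 𝒳] [Fintype 𝒮] [Nonempty 𝒮]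
    {d : ℕ}
    (ρ : 𝒳 → 𝒮 → Matrix (Fin d) (Fin d) ℂ)
    (hρ : ∀ x s, IsDensity (ρ x s))
    (n : ℕ) (hn : 1 ≤ n) (Rhat : ℝ) (hR : 0 < Rhat) :
    ∃ T : Matrix ((Fin n → 𝒳) × (Fin n → Fin d)) ((Fin n → 𝒳) × (Fin n → Fin d)) ℂ,
      T.PosSemidef ∧ (1 - T).PosSemidef ∧
      ∀ P : 𝒳 → ℝ, (∀ x, 0 ≤ P x) → (∑ x, P x = 1) →
      ∀ t : ℝ, t ∈ Set.Ioo (0 : ℝ) 1 →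
        (∀ sv : Fin n → 𝒮,
          (Matrix.trace ((1 - T) *
            cqState (fun xv : Fin n → 𝒳 => ∏ k, P (xv k))
              (fun xv => tensorFam fun k => ρ (xv k) (sv k)))).re ≤
            ((n : ℝ) + 1) ^
                (((Fintype.card 𝒮 : ℝ) - 1)
                  + t * (Fintype.card 𝒳) * ((d : ℝ) - 1) * (d : ℝ) / 2
                  + ((d : ℝ) - 1) * (Fintype.card 𝒳) * t) *
              (2 : ℝ) ^ ((n : ℝ) * t *
                (Rhat - ⨅ Q : ProbVec 𝒮,
                  renyiI P (fun x => ∑ s, Q.1 s • ρ x s) t))) ∧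
        (∀ σ : Matrix (Fin n → Fin d) (Fin n → Fin d) ℂ, IsDensity σ →
          (Matrix.trace (T *
            cqState (fun xv : Fin n → 𝒳 => ∏ k, P (xv k)) (fun _ => σ))).re ≤
            (n : ℝ) ^ ((d : ℝ) * ((d : ℝ) - 1) / 2) * (numPartLe n d : ℝ) *
              (2 : ℝ) ^ (-(n : ℝ) * Rhat)) := by
  obtain ⟨T, hT⟩ : ∃ T, IsUniversalTest ρ n Rhat T := by
    rcases le_or_gt (Fintype.card 𝒳) 1 with h𝒳 | h𝒳
    · have := Fintype.card_le_one_iff_subsingleton.1 h𝒳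
      exact ⟨0, isUniversalTest_zero hρ hR.le⟩
    · obtain ⟨x⟩ : Nonempty 𝒳 := Fintype.card_pos_iff.1 (zero_lt_one.trans h𝒳)
      obtain ⟨d, rfl⟩ := Nat.exists_eq_add_of_le' (pos_of_isDensity (hρ x (Classical.arbitrary 𝒮)))
      exact exists_isUniversalTest_of_two_le_card hρ h𝒳 hn Rhat
  exact ⟨T, hT.posSemidef, hT.posSemidef_one_sub, fun P hP hP1 t ht =>
    ⟨hT.typeI_le hP hP1 ht, fun σ hσ => hT.typeII_le hP hP1 hσ⟩⟩
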